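/- arXiv:2207.09681 — 2 statements merged into one kernel-verified Lean document; each statement's English description precedes it below -/
import Mathlib

section
/- Let n ≥ 46656. Among all simple graphs on n vertices containing no 3 pairwise edge-disjoint cycles (i.e., with φ ≤ 2), the graph K1∇(F₂ ∪ (n−6)K₁), obtained by joining a new vertex to the disjoint union of the friendship graph F₂ and n−6 isolated vertices, is the unique graph (up to isomorphism) maximizing the spectral radius of the adjacency matrix. -/
open scoped Classical

namespace PaperEDC

/-- `G` contains `m` pairwise edge-disjoint cycles. -/
def HasEDC {V : Type*} (G : SimpleGraph V) (m : ℕ) : Prop :=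
  ∃ c : Fin m → Σ v : V, G.Walk v v,
    (∀ i, (c i).2.IsCycle) ∧
    ∀ i j, i ≠ j → ∀ e ∈ (c i).2.edges, e ∉ (c j).2.edges

/-- `φ(G)`: the maximum number of pairwise edge-disjoint cycles in `G`. -/
noncomputable def phi {V : Type*} (G : SimpleGraph V) : ℕ := sSup {m | HasEDC G m}

/-- `K₁ ∇ H`: the join of a single new vertex with `H`. -/
def joinK1 {V : Type*} (H : SimpleGraph V) : SimpleGraph (Option V) :=
  SimpleGraph.fromRel fun a b => a = none ∨ ∃ u v, a = some u ∧ b = some v ∧ H.Adj u v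

/-- `t(G)`: the number of triangles of `G`. -/
noncomputable def triCount {V : Type*} (G : SimpleGraph V) : ℕ :=
  Nat.card {s : Finset V // G.IsNClique 3 s}

/-- A triangle-cactus: a connected graph in which every edge lies on a cycle and every
cycle is a triangle. -/
def IsTriangleCactus {V : Type*} (G : SimpleGraph V) : Prop :=
  G.Connected ∧
  (∀ e ∈ G.edgeSet, ∃ (v : V) (w : G.Walk v v), w.IsCycle ∧ e ∈ w.edges) ∧
  ∀ (v : V) (w : G.Walk v v), w.IsCycle → w.length = 3

/-- `e(G)`: the number of edges of `G`. -/
noncomputable def ecard {V : Type*} (G : SimpleGraph V) : ℕ := Nat.card G.edgeSet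

/-- `ρ(G)`: the spectral radius (largest adjacency eigenvalue) of `G`. -/
noncomputable def specRad {V : Type*} [Fintype V] (G : SimpleGraph V) : ℝ :=
  sSup {x : ℝ | ∃ f : V → ℝ, f ≠ 0 ∧ ∀ v : V, ∑ u : V, (if G.Adj v u then f u else 0) = x * f v}

/-- The disjoint union `F₂ ∪ (m-5)K₁`: the friendship graph `F₂` (two triangles sharing
exactly one vertex, the vertex `0`) on the first five vertices of `Fin m` together with
`m - 5` isolated vertices. -/
def f2PlusIsolated (m : ℕ) : SimpleGraph (Fin m) :=
  SimpleGraph.fromRel fun i j =>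
    (i.val = 0 ∧ 1 ≤ j.val ∧ j.val ≤ 4) ∨ (i.val = 1 ∧ j.val = 2) ∨ (i.val = 3 ∧ j.val = 4)

/-!
Suppose a graph has at least `25` more edges than vertices. Deleting surplus edges and vertices of
degree one, and suppressing vertices of degree two, creates no new packings of edge-disjoint cycles
and ends in a graph of minimum degree at least three with few vertices, which by the Moore bound has
a cycle of length at most `12`. Taking out such a short cycle and repeating gives three
edge-disjoint cycles. So a graph without them is sparse: every vertex set `S` spans at most
`|S| + 24` edges.

Let `G` be extremal, `ρ` its spectral radius, and `x` a Perron vector with largest entry `x u = 1`.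
Hanging a non-neighbour `v` of `u` from `u` by a single edge creates no new cycle, so extremality
gives `ρ * x v > 1`. Sparsity makes all entries of `x` other than `x u` at most `1 / 3`, and then
leaves `u` with boundedly many non-neighbours, whose entries would be too small; so `u` is adjacent
to every other vertex and `G = K₁ ∇ H`.

Three edge-disjoint cycles of `K₁ ∇ H` arise from small configurations in `H`, because each edge
and each path of length two of `H` closes up through the apex. Avoiding them, `H` is `F₂` with
isolated vertices or satisfies `e(H) ≤ 6` and `∑ d(v)² ≤ 30`. As
`ρ * (ρ² - |H|) ≈ ∑ d(v) + ∑ d(v)² / ρ` for a cone over `H`, the values `12` and `32` attained by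
`F₂` win.
-/

open Function

section EdgeDisjointCycles

variable {V W : Type*} {G G' : SimpleGraph V} {m : ℕ}

theorem HasEDC.of_edges_mem
    (hG : ∀ (v : V) (w : G'.Walk v v), w.IsCycle → ∀ e ∈ w.edges, e ∈ G.edgeSet)
    (h : HasEDC G' m) : HasEDC G m := by
  obtain ⟨c, hc, hd⟩ := h
  refine ⟨fun i => ⟨(c i).1, (c i).2.transfer G (hG _ _ (hc i))⟩,
    fun i => (hc i).transfer _, fun i j hij e he => ?_⟩
  rw [SimpleGraph.Walk.edges_transfer] at he ⊢
  exact hd i j hij e he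

theorem HasEDC.map {H : SimpleGraph W} (f : G ↪g H) (h : HasEDC G m) : HasEDC H m := by
  obtain ⟨c, hc, hd⟩ := h
  refine ⟨fun i => ⟨f (c i).1, (c i).2.map f.toHom⟩,
    fun i => (hc i).map f.injective, fun i j hij e he he' => ?_⟩
  rw [SimpleGraph.Walk.edges_map, List.mem_map] at he he'
  obtain ⟨a, ha, rfl⟩ := he
  obtain ⟨b, hb, hab⟩ := he'
  exact hd i j hij a ha (Sym2.map.injective f.injective hab ▸ hb)

theorem HasEDC.le_card_sym2 [Fintype V] (h : HasEDC G m) : m ≤ Fintype.card (Sym2 V) := by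
  obtain ⟨c, hc, hd⟩ := h
  have exists_edge (i : Fin m) : ∃ e, e ∈ (c i).2.edges :=
    List.exists_mem_of_ne_nil _ (SimpleGraph.Walk.edges_eq_nil.not.mpr (hc i).not_nil)
  choose e he using exists_edge
  have e_injective : Injective e := fun i j hij => by
    by_contra hne
    exact hd i j hne (e i) (he i) (hij ▸ he j)
  simpa using Fintype.card_le_of_injective e e_injective

theorem not_hasEDC_of_phi_lt [Finite V] (h : phi G < m) : ¬HasEDC G m := fun hm =>
  have := Fintype.ofFinite V
  h.not_ge (le_csSup ⟨_, fun _ hk => HasEDC.le_card_sym2 hk⟩ hm)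

end EdgeDisjointCycles

section CyclicPackings

variable {V : Type*} {G G' K : SimpleGraph V} {a b v : V} {k : ℕ}

/-- `G` contains `k` pairwise edge-disjoint subgraphs each of which has a cycle. This is equivalent
to `HasEDC G k`, but more convenient for local modifications of `G`. -/
def HasCyclicPacking (G : SimpleGraph V) (k : ℕ) : Prop :=
  ∃ K : Fin k → SimpleGraph V, Pairwise (Disjoint on K) ∧ ∀ i, K i ≤ G ∧ ¬(K i).IsAcyclic

theorem HasCyclicPacking.hasEDC (h : HasCyclicPacking G k) : HasEDC G k := by
  obtain ⟨K, hdisj, hK⟩ := h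
  have exists_cycle (i : Fin k) : ∃ v, ∃ w : (K i).Walk v v, w.IsCycle := by
    simpa only [SimpleGraph.IsAcyclic, not_forall, not_not] using (hK i).2
  choose v w hw using exists_cycle
  have mem_edgeSet (i : Fin k) : ∀ e ∈ (w i).edges, e ∈ (K i).edgeSet :=
    fun e he => (w i).edges_subset_edgeSet he
  refine ⟨fun i => ⟨v i, (w i).transfer G fun e he =>
    SimpleGraph.edgeSet_mono (hK i).1 (mem_edgeSet i e he)⟩,
    fun i => (hw i).transfer _, fun i j hij e he he' => ?_⟩
  rw [SimpleGraph.Walk.edges_transfer] at he he'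
  exact Set.disjoint_left.mp (SimpleGraph.disjoint_edgeSet.mpr (hdisj hij))
    (mem_edgeSet i e he) (mem_edgeSet j e he')

theorem HasCyclicPacking.mono (h : G ≤ G') (hG : HasCyclicPacking G k) : HasCyclicPacking G' k :=
  let ⟨K, hdisj, hK⟩ := hG
  ⟨K, hdisj, fun i => ⟨(hK i).1.trans h, (hK i).2⟩⟩

theorem HasCyclicPacking.succ (hK : K ≤ G) (hcyc : ¬K.IsAcyclic)
    (h : HasCyclicPacking (G \ K) k) : HasCyclicPacking G (k + 1) := by
  obtain ⟨L, hdisj, hL⟩ := h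
  have hKL (i : Fin k) : Disjoint K (L i) := disjoint_sdiff_self_right.mono_right (hL i).1
  refine ⟨Fin.cons K L, fun i j hij => ?_, Fin.cases ⟨hK, hcyc⟩ fun i =>
    ⟨(hL i).1.trans sdiff_le, (hL i).2⟩⟩
  cases i using Fin.cases <;> cases j using Fin.cases
  · exact absurd rfl hij
  · exact hKL _
  · exact (hKL _).symm
  · exact hdisj (by simpa using hij)

/-- `G` with the edge `ab` replaced by the path `a v b`. -/
def subdivide (G : SimpleGraph V) (a v b : V) : SimpleGraph V :=
  G \ SimpleGraph.edge a b ⊔ SimpleGraph.edge a v ⊔ SimpleGraph.edge v b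

/-- `G` with the path `a v b` through a vertex `v` of degree two replaced by the edge `ab`. -/
def suppress (G : SimpleGraph V) (a v b : V) : SimpleGraph V :=
  G.deleteIncidenceSet v ⊔ SimpleGraph.edge a b

theorem not_isAcyclic_subdivide (hv : ∀ w, ¬G.Adj v w) (ha : a ≠ v) (hb : b ≠ v) (hab : a ≠ b)
    (hG : ¬G.IsAcyclic) : ¬(subdivide G a v b).IsAcyclic := by
  intro hac
  have le_subdivide : G \ SimpleGraph.edge a b ≤ subdivide G a v b :=
    le_sup_left.trans le_sup_left
  by_cases hr : (G \ SimpleGraph.edge a b).Reachable a b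
  · have hav : (subdivide G a v b).Adj a v := by simp [subdivide, SimpleGraph.edge_adj, ha]
    have le_delete : G \ SimpleGraph.edge a b ≤
        subdivide G a v b \ SimpleGraph.fromEdgeSet {s(a, v)} := fun x y hxy => by
      have hx : x ≠ v := by rintro rfl; exact hv _ hxy.1
      have hy : y ≠ v := by rintro rfl; exact hv _ hxy.1.symm
      exact ⟨le_subdivide hxy, by simp [hx, hy]⟩
    have hbv : (subdivide G a v b \ SimpleGraph.fromEdgeSet {s(a, v)}).Adj b v := by
      simp [subdivide, SimpleGraph.edge_adj, hb, hab.symm]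
    refine SimpleGraph.isBridge_iff.mp
      (SimpleGraph.isAcyclic_iff_forall_adj_isBridge.mp hac hav) ?_
    exact (hr.mono le_delete).trans hbv.reachable
  · refine hG ((SimpleGraph.IsAcyclic.sup_edge_of_not_reachable hr
      (hac.anti le_subdivide)).anti ?_)
    rw [sdiff_sup_self]
    exact le_sup_left

theorem HasCyclicPacking.of_suppress (hav : G.Adj a v) (hvb : G.Adj v b) (hab : a ≠ b)
    (h : HasCyclicPacking (suppress G a v b) k) : HasCyclicPacking G k := by
  obtain ⟨K, hdisj, hK⟩ := h
  have not_adj (i : Fin k) (w : V) : ¬(K i).Adj v w := fun hvw => by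
    have := (hK i).1 hvw
    simp [suppress, SimpleGraph.deleteIncidenceSet_adj, SimpleGraph.edge_adj, hav.ne',
      hvb.ne] at this
  have le_of_not_adj {i : Fin k} (hi : ¬(K i).Adj a b) : K i ≤ G := fun x y hxy => by
    rcases (hK i).1 hxy with h | h
    · exact G.deleteIncidenceSet_le v h
    · obtain ⟨⟨rfl, rfl⟩ | ⟨rfl, rfl⟩, -⟩ := (SimpleGraph.edge_adj ..).mp h
      exacts [absurd hxy hi, absurd hxy.symm hi]
  have subdivide_le (i : Fin k) : subdivide (K i) a v b ≤ G := by
    refine sup_le (sup_le ?_ ((SimpleGraph.edge_le_iff ..).mpr (.inr hav)))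
      ((SimpleGraph.edge_le_iff ..).mpr (.inr hvb))
    exact (sdiff_le_sdiff_right (hK i).1).trans
      ((sup_sdiff_right_self ..).trans_le (sdiff_le.trans (G.deleteIncidenceSet_le v)))
  have disjoint_subdivide {i j : Fin k} (hij : i ≠ j) : Disjoint (subdivide (K i) a v b) (K j) := by
    refine disjoint_sup_left.mpr ⟨disjoint_sup_left.mpr ⟨(hdisj hij).mono_left sdiff_le, ?_⟩, ?_⟩
    · exact ((SimpleGraph.disjoint_edge _).mpr fun h => not_adj j _ h.symm).symm
    · exact ((SimpleGraph.disjoint_edge _).mpr (not_adj j _)).symm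
  refine ⟨fun i => if (K i).Adj a b then subdivide (K i) a v b else K i, fun i j hij => ?_,
    fun i => ?_⟩
  · by_cases hi : (K i).Adj a b <;> by_cases hj : (K j).Adj a b <;>
      simp only [onFun, if_pos, if_neg, hi, hj, not_false_eq_true]
    · exact ((disjoint_iff_inf_le.mp (hdisj hij) : K i ⊓ K j ≤ ⊥) ⟨hi, hj⟩).elim
    · exact disjoint_subdivide hij
    · exact (disjoint_subdivide hij.symm).symm
    · exact hdisj hij
  · beta_reduce
    split_ifs with hi
    · exact ⟨subdivide_le i, not_isAcyclic_subdivide (not_adj i) hav.ne hvb.ne' hab (hK i).2⟩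
    · exact ⟨le_of_not_adj hi, (hK i).2⟩

end CyclicPackings

section MooreBound

variable {V : Type*} {G : SimpleGraph V}

theorem eq_of_isPath_of_length_add_lt_egirth {x y : V} {p q : G.Walk x y} (hp : p.IsPath)
    (hq : q.IsPath) (h : ((p.length + q.length : ℕ) : ℕ∞) < G.egirth) : p = q := by
  by_contra hne
  obtain ⟨w, -, -, c, hc, hlen⟩ := hp.exists_isCycle_length_le_add_of_ne hq hne
  exact h.not_ge ((SimpleGraph.egirth_le_length hc).trans (mod_cast hlen))

/-- The ends of the paths of length `i` in `G` that start at `r`: the `i`-th sphere around `r` as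
long as `G` looks like a tree. -/
def pathEnds (G : SimpleGraph V) (r : V) (i : ℕ) : Set V :=
  {v | ∃ p : G.Walk r v, p.IsPath ∧ p.length = i}

theorem pathEnds_subset_support {r : V} (hr : r ∈ G.support) (i : ℕ) :
    pathEnds G r i ⊆ G.support := by
  rintro v ⟨p, -, -⟩
  by_cases hp : p.Nil
  · exact hp.eq ▸ hr
  · exact ⟨_, (p.adj_penultimate hp).symm⟩

theorem isPath_concat_of_ne_penultimate {r v w : V} {p : G.Walk r v} (hp : p.IsPath)
    (hvw : G.Adj v w) (hw : w ≠ p.penultimate) (h : ((p.length + 1 : ℕ) : ℕ∞) < G.egirth) :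
    (p.concat hvw).IsPath := by
  refine hp.concat (fun hmem => hw ?_) hvw
  have drop_eq : p.dropUntil w hmem = hvw.symm.toWalk :=
    eq_of_isPath_of_length_add_lt_egirth (hp.dropUntil hmem) (by simp [hvw.ne'])
      (h.trans_le' (by gcongr; exacts [p.length_dropUntil_le_length hmem, le_rfl]))
  have take_concat := p.take_spec hmem
  rw [drop_eq] at take_concat
  simpa [← SimpleGraph.Walk.concat_eq_append] using
    congrArg SimpleGraph.Walk.penultimate take_concat

theorem mul_ncard_pathEnds_le [Fintype V] {r : V} {δ i : ℕ} (hr : r ∈ G.support)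
    (hδ : ∀ v ∈ G.support, δ + 1 ≤ G.degree v) (hi : ((2 * (i + 1) : ℕ) : ℕ∞) < G.egirth) :
    δ * (pathEnds G r i).ncard ≤ (pathEnds G r (i + 1)).ncard := by
  have exists_path (v : pathEnds G r i) : ∃ p : G.Walk r v, p.IsPath ∧ p.length = i := v.2
  choose p hp hlen using exists_path
  let next (v : pathEnds G r i) : Finset V := (G.neighborFinset v).erase (p v).penultimate
  have exists_extension {v : pathEnds G r i} {w : V} (hw : w ∈ next v) :
      ∃ q : G.Walk r w, q.IsPath ∧ q.length = i + 1 ∧ q.penultimate = v := by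
    obtain ⟨hne, hadj⟩ := Finset.mem_erase.mp hw
    rw [SimpleGraph.mem_neighborFinset] at hadj
    refine ⟨(p v).concat hadj, isPath_concat_of_ne_penultimate (hp v) hadj hne (hi.trans_le' ?_),
      by simp [hlen], by simp⟩
    rw [hlen]
    exact_mod_cast (by lia : i + 1 ≤ 2 * (i + 1))
  have next_disjoint : ((Finset.univ : Finset (pathEnds G r i)) : Set _).PairwiseDisjoint next := by
    refine fun v _ v' _ hne => Finset.disjoint_left.mpr fun w hw hw' => hne (Subtype.ext ?_)
    obtain ⟨q, hq, hql, hqv⟩ := exists_extension hw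
    obtain ⟨q', hq', hql', hqv'⟩ := exists_extension hw'
    rw [← hqv, ← hqv', eq_of_isPath_of_length_add_lt_egirth hq hq' (hi.trans_le' _)]
    exact_mod_cast (by lia : q.length + q'.length ≤ 2 * (i + 1))
  have next_subset : (Finset.univ.biUnion next : Set V) ⊆ pathEnds G r (i + 1) := fun w hw => by
    simp only [Finset.coe_biUnion, Set.mem_iUnion] at hw
    obtain ⟨v, -, hw⟩ := hw
    obtain ⟨q, hq, hql, -⟩ := exists_extension hw
    exact ⟨q, hq, hql⟩
  have le_card_next (v : pathEnds G r i) : δ ≤ (next v).card := by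
    have := Finset.pred_card_le_card_erase (s := G.neighborFinset v) (a := (p v).penultimate)
    rw [G.card_neighborFinset_eq_degree] at this
    have := hδ v (pathEnds_subset_support hr i v.2)
    lia
  calc δ * (pathEnds G r i).ncard = ∑ _v : pathEnds G r i, δ := by
        rw [← Nat.card_coe_set_eq, Nat.card_eq_fintype_card]; simp [mul_comm]
    _ ≤ ∑ v, (next v).card := Finset.sum_le_sum fun v _ => le_card_next v
    _ = (Finset.univ.biUnion next).card := (Finset.card_biUnion next_disjoint).symm
    _ ≤ (pathEnds G r (i + 1)).ncard := by
        rw [← Set.ncard_coe_finset]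
        exact Set.ncard_le_ncard next_subset (Set.toFinite _)

theorem pow_le_ncard_support [Fintype V] {δ d : ℕ} (hne : G.support.Nonempty)
    (hδ : ∀ v ∈ G.support, δ + 1 ≤ G.degree v) (hd : ((2 * d : ℕ) : ℕ∞) < G.egirth) :
    δ ^ d ≤ G.support.ncard := by
  obtain ⟨r, hr⟩ := hne
  suffices h : ∀ i ≤ d, δ ^ i ≤ (pathEnds G r i).ncard from
    (h d le_rfl).trans (Set.ncard_le_ncard (pathEnds_subset_support hr d) (Set.toFinite _))
  intro i hi
  induction i with
  | zero =>
    rw [pow_zero, Nat.one_le_iff_ne_zero, ← Nat.pos_iff_ne_zero, Set.ncard_pos]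
    exact ⟨r, .nil, .nil, rfl⟩
  | succ i ih =>
    calc δ ^ (i + 1) = δ * δ ^ i := pow_succ' δ i
      _ ≤ δ * (pathEnds G r i).ncard := Nat.mul_le_mul_left δ (ih (by lia))
      _ ≤ _ := mul_ncard_pathEnds_le hr hδ (hd.trans_le' (by gcongr))

end MooreBound

section ManyEdges

variable {V : Type*} [Fintype V] {G : SimpleGraph V} {d k : ℕ}

theorem ecard_eq_card_edgeFinset (G : SimpleGraph V) : ecard G = G.edgeFinset.card := by
  rw [ecard, Nat.card_eq_fintype_card, SimpleGraph.edgeFinset_card]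

theorem sum_degree_eq_two_mul_ecard (G : SimpleGraph V) : ∑ v, G.degree v = 2 * ecard G := by
  rw [ecard_eq_card_edgeFinset, G.sum_degrees_eq_twice_card_edges]

theorem ecard_le_ecard_sdiff_add {V : Type*} [Finite V] (G K : SimpleGraph V) :
    ecard G ≤ ecard (G \ K) + ecard K := by
  have subset_union : G.edgeSet ⊆ (G \ K).edgeSet ∪ K.edgeSet := by
    rw [SimpleGraph.edgeSet_sdiff, Set.sdiff_union_self]
    exact Set.subset_union_left
  exact (Set.ncard_le_ncard subset_union (Set.toFinite _)).trans (Set.ncard_union_le _ _)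

theorem ecard_deleteIncidenceSet_add_degree (G : SimpleGraph V) (v : V) :
    ecard (G.deleteIncidenceSet v) + G.degree v = ecard G := by
  have := G.card_edgeFinset_deleteIncidenceSet v
  have := G.degree_le_card_edgeFinset v
  rw [ecard_eq_card_edgeFinset, ecard_eq_card_edgeFinset]
  convert Nat.sub_add_cancel this using 2
  convert ‹_ = _›

theorem three_mul_ncard_support_le (hG : ∀ v ∈ G.support, 3 ≤ G.degree v) :
    3 * G.support.ncard ≤ 2 * ecard G := by
  rw [ecard_eq_card_edgeFinset, ← G.sum_degrees_support_eq_twice_card_edges,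
    Set.ncard_eq_toFinset_card', mul_comm, ← smul_eq_mul]
  exact Finset.card_nsmul_le_sum _ _ _ fun v hv => hG v (Set.mem_toFinset.mp hv)

theorem exists_le_not_isAcyclic_ecard_le {V : Type*} {G : SimpleGraph V} {d : ℕ}
    (h : G.egirth ≤ d) : ∃ K ≤ G, ¬K.IsAcyclic ∧ ecard K ≤ d := by
  have hG : ¬G.IsAcyclic := by
    rw [← SimpleGraph.egirth_eq_top]
    exact ne_top_of_le_ne_top (ENat.natCast_ne_top d) h
  obtain ⟨v, w, hw, hgirth⟩ := SimpleGraph.exists_egirth_eq_length.mpr hG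
  let K : SimpleGraph V := SimpleGraph.fromEdgeSet {e | e ∈ w.edges}
  have edges_subset : ∀ e ∈ w.edges, e ∈ K.edgeSet := fun e he => by
    rw [SimpleGraph.edgeSet_fromEdgeSet]
    exact ⟨he, G.not_isDiag_of_mem_edgeSet (w.edges_subset_edgeSet he)⟩
  have edgeSet_subset : K.edgeSet ⊆ (w.edges.toFinset : Set (Sym2 V)) := by
    simp [K, SimpleGraph.edgeSet_fromEdgeSet]
  refine ⟨K, ?_, fun hK => hK _ (hw.transfer edges_subset), ?_⟩
  · rw [← SimpleGraph.edgeSet_subset_edgeSet]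
    exact fun e he => w.edges_subset_edgeSet (by simpa using edgeSet_subset he)
  · calc ecard K ≤ (w.edges.toFinset : Set (Sym2 V)).ncard :=
          Set.ncard_le_ncard edgeSet_subset (Finset.finite_toSet _)
      _ ≤ w.length := by
          rw [Set.ncard_coe_finset, ← w.length_edges]
          exact w.edges.toFinset_card_le
      _ ≤ d := by exact_mod_cast hgirth ▸ h

theorem ecard_suppress {a b v : V} (hv : G.degree v = 2) (hab : a ≠ b) (hadj : ¬G.Adj a b) :
    ecard G = ecard (suppress G a v b) + 1 := by
  have not_adj : ¬(G.deleteIncidenceSet v).Adj a b := fun h => hadj (G.deleteIncidenceSet_le v h)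
  have := SimpleGraph.card_edgeFinset_sup_edge _ not_adj hab
  have ecard_sup : ecard (suppress G a v b) = ecard (G.deleteIncidenceSet v) + 1 := by
    rw [suppress, ecard_eq_card_edgeFinset, ecard_eq_card_edgeFinset]
    convert this
  rw [← ecard_deleteIncidenceSet_add_degree G v, hv, ecard_sup]

theorem support_suppress_subset {V : Type*} {G : SimpleGraph V} {a b v : V} (hav : G.Adj a v)
    (hvb : G.Adj v b) : (suppress G a v b).support ⊆ G.support \ {v} := by
  rintro x ⟨y, h | h⟩
  · exact G.support_deleteIncidenceSet_subset v ⟨y, h⟩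
  · obtain ⟨⟨rfl, rfl⟩ | ⟨rfl, rfl⟩, -⟩ := (SimpleGraph.edge_adj ..).mp h
    exacts [⟨⟨_, hav⟩, hav.ne⟩, ⟨⟨_, hvb.symm⟩, hvb.ne'⟩]

theorem not_adj_of_three_lt_egirth {V : Type*} {G : SimpleGraph V} {a b v : V}
    (hG : 3 < G.egirth) (hav : G.Adj a v) (hvb : G.Adj v b) : ¬G.Adj a b := fun hab => by
  obtain ⟨x, w, hw, hlen⟩ := SimpleGraph.is3Clique_iff_exists_cycle_length_three.mp
    ⟨{a, v, b}, SimpleGraph.is3Clique_triple_iff.mpr ⟨hav, hab, hvb⟩⟩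
  exact hG.not_ge ((SimpleGraph.egirth_le_length hw).trans_eq (by simp [hlen]))

/-- Removing a vertex of degree one, or suppressing a vertex of degree two, costs at least one
vertex but only one edge. -/
theorem exists_reduction_of_degree_le_two {v : V} (hG : 3 < G.egirth) (hv : v ∈ G.support)
    (hdeg : G.degree v ≤ 2) :
    ∃ G' : SimpleGraph V, G'.support.ncard < G.support.ncard ∧ ecard G = ecard G' + 1 ∧
      ∀ k, HasCyclicPacking G' k → HasCyclicPacking G k := by
  have ncard_lt {G' : SimpleGraph V} (h : G'.support ⊆ G.support \ {v}) :
      G'.support.ncard < G.support.ncard :=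
    (Set.ncard_le_ncard h (Set.toFinite _)).trans_lt (Set.ncard_sdiff_singleton_lt_of_mem hv)
  have degree_pos : 0 < G.degree v := (G.degree_pos_iff_mem_support v).mpr hv
  obtain hone | htwo : G.degree v = 1 ∨ G.degree v = 2 := by lia
  · exact ⟨G.deleteIncidenceSet v, ncard_lt (G.support_deleteIncidenceSet_subset v),
      by rw [← ecard_deleteIncidenceSet_add_degree G v, hone],
      fun k => .mono (G.deleteIncidenceSet_le v)⟩
  · obtain ⟨a, b, hab, hN⟩ := Finset.card_eq_two.mp htwo
    have hva : G.Adj v a := by simp [← SimpleGraph.mem_neighborFinset, hN]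
    have hvb : G.Adj v b := by simp [← SimpleGraph.mem_neighborFinset, hN]
    exact ⟨suppress G a v b, ncard_lt (support_suppress_subset hva.symm hvb),
      ecard_suppress htwo hab (not_adj_of_three_lt_egirth hG hva.symm hvb),
      fun k => .of_suppress hva.symm hvb hab⟩

/-- If low-degree reductions and deletions of surplus edges lead nowhere, then `G` has minimum
degree at least three and about as many edges as vertices, contradicting the Moore bound. -/
theorem HasCyclicPacking.of_ecard_of_egirth {V : Type*} [Finite V] (hd : 4 * d * k + 2 < 2 ^ d)
    (hshort : ∀ G : SimpleGraph V, G.support.ncard + 2 * d * k + 1 ≤ ecard G →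
      G.egirth ≤ (2 * d : ℕ) → HasCyclicPacking G (k + 1)) :
    ∀ G : SimpleGraph V, G.support.ncard + 2 * d * k + 1 ≤ ecard G →
      HasCyclicPacking G (k + 1) := by
  have := Fintype.ofFinite V
  intro G
  induction hn : ecard G using Nat.strong_induction_on generalizing G with | _ n ih
  subst hn
  intro hG
  by_cases hgirth : G.egirth ≤ (2 * d : ℕ)
  · exact hshort G hG hgirth
  rw [not_le] at hgirth
  have two_le_d : 2 ≤ d := by
    by_contra! h
    interval_cases d <;> simp at hd
  have nonempty_edges : G.edgeSet.Nonempty := by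
    rw [← Set.ncard_pos]
    exact lt_of_lt_of_le (by lia) hG
  rcases hG.lt_or_eq with hlt | heq
  · obtain ⟨e, he⟩ := nonempty_edges
    have ecard_delete : ecard (G.deleteEdges {e}) + 1 = ecard G := by
      rw [ecard, SimpleGraph.edgeSet_deleteEdges]
      exact Set.ncard_sdiff_singleton_add_one he
    have support_le : (G.deleteEdges {e}).support.ncard ≤ G.support.ncard :=
      Set.ncard_le_ncard (SimpleGraph.support_mono (G.deleteEdges_le _)) (Set.toFinite _)
    exact (ih _ (by lia) (G.deleteEdges {e}) rfl (by lia)).mono (G.deleteEdges_le _)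
  by_cases hmin : ∀ v ∈ G.support, 3 ≤ G.degree v
  · have nonempty_support : G.support.Nonempty := by
      obtain ⟨⟨x, y⟩, hxy⟩ := nonempty_edges
      exact ⟨x, y, hxy⟩
    have := pow_le_ncard_support nonempty_support hmin hgirth
    have := three_mul_ncard_support_le hmin
    lia
  · push Not at hmin
    obtain ⟨v, hv, hdeg⟩ := hmin
    obtain ⟨G', hsupp, hcard, lift⟩ := exists_reduction_of_degree_le_two
      (hgirth.trans_le' (by exact_mod_cast (by lia : 3 ≤ 2 * d))) hv (by lia)
    exact lift _ (ih _ (by lia) G' rfl (by lia))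

theorem HasCyclicPacking.of_ecard {V : Type*} [Finite V] {G : SimpleGraph V}
    (hd : 4 * d * k + 2 < 2 ^ d) (hG : G.support.ncard + 2 * d * k + 1 ≤ ecard G) :
    HasCyclicPacking G (k + 1) := by
  induction k generalizing G with
  | zero =>
    refine of_ecard_of_egirth hd (fun G _ hgirth => ?_) G hG
    obtain ⟨K, hK, hcyc, -⟩ := exists_le_not_isAcyclic_ecard_le hgirth
    exact .succ hK hcyc ⟨Fin.elim0, fun i => i.elim0, fun i => i.elim0⟩
  | succ k ih =>
    refine of_ecard_of_egirth hd (fun G hG hgirth => ?_) G hG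
    obtain ⟨K, hK, hcyc, hcard⟩ := exists_le_not_isAcyclic_ecard_le hgirth
    have := ecard_le_ecard_sdiff_add G K
    have : (G \ K).support.ncard ≤ G.support.ncard :=
      Set.ncard_le_ncard (SimpleGraph.support_mono sdiff_le) (Set.toFinite _)
    exact .succ hK hcyc (ih (by lia) (by lia))

theorem sum_sum_adjMatrix (G : SimpleGraph V) :
    ∑ v, ∑ w, G.adjMatrix ℝ v w = 2 * ecard G := by
  simp only [SimpleGraph.adjMatrix_apply, Finset.sum_boole, ← SimpleGraph.neighborFinset_eq_filter,
    SimpleGraph.card_neighborFinset_eq_degree]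
  exact_mod_cast sum_degree_eq_two_mul_ecard G

/-- Every set `S` of vertices spans at most `|S| + c` edges; each of them is counted twice. -/
def IsSparse {V : Type*} (G : SimpleGraph V) (c : ℕ) : Prop :=
  ∀ S : Finset V, ∑ v ∈ S, ∑ w ∈ S, G.adjMatrix ℝ v w ≤ 2 * (S.card + c)

theorem isSparse_of_not_hasEDC {V : Type*} [Finite V] {G : SimpleGraph V}
    (hd : 4 * d * k + 2 < 2 ^ d) (hG : ¬HasEDC G (k + 1)) :
    IsSparse G (2 * d * k) := fun S => by
  have := Fintype.ofFinite V
  obtain ⟨H, H_adj⟩ : ∃ H : SimpleGraph V, ∀ v w, H.Adj v w ↔ G.Adj v w ∧ v ∈ S ∧ w ∈ S :=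
    ⟨(G.induce (S : Set V)).spanningCoe, by simp⟩
  have support_le : H.support.ncard ≤ S.card := by
    rw [← Set.ncard_coe_finset]
    refine Set.ncard_le_ncard ?_ (Set.toFinite _)
    rintro v ⟨w, hvw⟩
    exact ((H_adj v w).mp hvw).2.1
  have ecard_le : ecard H ≤ S.card + 2 * d * k := by
    by_contra! h
    exact hG ((HasCyclicPacking.of_ecard hd (G := H) (by lia)).mono
      fun v w hvw => ((H_adj _ _).mp hvw).1).hasEDC
  calc ∑ v ∈ S, ∑ w ∈ S, G.adjMatrix ℝ v w = ∑ v, ∑ w, H.adjMatrix ℝ v w := by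
        rw [← Finset.sum_subset S.subset_univ fun v _ hv => by simp [H_adj, hv]]
        refine Finset.sum_congr rfl fun v hv => ?_
        rw [← Finset.sum_subset S.subset_univ fun w _ hw => by simp [H_adj, hw]]
        exact Finset.sum_congr rfl fun w hw => by simp [H_adj, hv, hw]
    _ = 2 * ecard H := sum_sum_adjMatrix H
    _ ≤ 2 * (S.card + (2 * d * k : ℕ)) := by exact_mod_cast Nat.mul_le_mul_left 2 ecard_le

end ManyEdges

section SpectralRadius

open Matrix

variable {V W : Type*} [Fintype V] [Fintype W] {G : SimpleGraph V} {H : SimpleGraph W}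

theorem specRad_eq_sSup (G : SimpleGraph V) :
    specRad G = sSup {r : ℝ | ∃ f : V → ℝ, f ≠ 0 ∧ G.adjMatrix ℝ *ᵥ f = r • f} := by
  simp only [specRad, funext_iff, mulVec, dotProduct, SimpleGraph.adjMatrix_apply, ite_mul, one_mul,
    zero_mul, Pi.smul_apply, smul_eq_mul]

theorem finite_eigenvalues (G : SimpleGraph V) :
    {r : ℝ | ∃ f : V → ℝ, f ≠ 0 ∧ G.adjMatrix ℝ *ᵥ f = r • f}.Finite := by
  refine (Module.End.finite_hasEigenvalue (G.adjMatrix ℝ).mulVecLin).subset ?_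
  rintro r ⟨f, hf, hr⟩
  exact Module.End.hasEigenvalue_of_hasEigenvector
    ⟨Module.End.mem_eigenspace_iff.mpr (by simpa using hr), hf⟩

theorem le_specRad {r : ℝ} {f : V → ℝ} (hf : f ≠ 0) (hr : G.adjMatrix ℝ *ᵥ f = r • f) :
    r ≤ specRad G := by
  rw [specRad_eq_sSup]
  exact le_csSup (finite_eigenvalues G).bddAbove ⟨f, hf, hr⟩

theorem exists_mulVec_eq_specRad_smul [Nonempty V] (G : SimpleGraph V) :
    ∃ f : V → ℝ, f ≠ 0 ∧ G.adjMatrix ℝ *ᵥ f = specRad G • f := by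
  rw [specRad_eq_sSup]
  refine Set.Nonempty.csSup_mem ?_ (finite_eigenvalues G)
  have hA : (G.adjMatrix ℝ).IsHermitian := G.isSymm_adjMatrix
  obtain ⟨i⟩ := ‹Nonempty V›
  exact ⟨hA.eigenvalues i, _, by simpa using hA.eigenvectorBasis.toBasis.ne_zero i,
    hA.mulVec_eigenvectorBasis i⟩

theorem posSemidef_specRad_smul_one_sub (G : SimpleGraph V) :
    (specRad G • (1 : Matrix V V ℝ) - G.adjMatrix ℝ).PosSemidef := by
  have hB : (specRad G • (1 : Matrix V V ℝ) - G.adjMatrix ℝ).IsHermitian :=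
    ((isHermitian_one).smul (by rfl)).sub (G.isSymm_adjMatrix)
  refine hB.posSemidef_iff_eigenvalues_nonneg.mpr fun i => ?_
  have eigen := hB.mulVec_eigenvectorBasis i
  rw [sub_mulVec, smul_mulVec, one_mulVec, sub_eq_iff_eq_add', ← sub_eq_iff_eq_add, ← sub_smul]
    at eigen
  have := le_specRad (by simpa using hB.eigenvectorBasis.toBasis.ne_zero i) eigen.symm
  simpa using this

theorem dotProduct_specRad_sub_mulVec (G : SimpleGraph V) (f : V → ℝ) :
    f ⬝ᵥ (specRad G • (1 : Matrix V V ℝ) - G.adjMatrix ℝ) *ᵥ f =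
      specRad G * (f ⬝ᵥ f) - f ⬝ᵥ G.adjMatrix ℝ *ᵥ f := by
  rw [sub_mulVec, smul_mulVec, one_mulVec, dotProduct_sub, dotProduct_smul, smul_eq_mul]

theorem dotProduct_adjMatrix_mulVec_le (G : SimpleGraph V) (f : V → ℝ) :
    f ⬝ᵥ G.adjMatrix ℝ *ᵥ f ≤ specRad G * (f ⬝ᵥ f) := by
  have := (posSemidef_specRad_smul_one_sub G).dotProduct_mulVec_nonneg f
  rwa [star_trivial, dotProduct_specRad_sub_mulVec, sub_nonneg] at this

theorem mulVec_eq_of_dotProduct_eq {f : V → ℝ}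
    (hf : f ⬝ᵥ G.adjMatrix ℝ *ᵥ f = specRad G * (f ⬝ᵥ f)) :
    G.adjMatrix ℝ *ᵥ f = specRad G • f := by
  have := ((posSemidef_specRad_smul_one_sub G).dotProduct_mulVec_zero_iff f).mp (by
    rw [star_trivial, dotProduct_specRad_sub_mulVec, hf, sub_self])
  rw [sub_mulVec, smul_mulVec, one_mulVec, sub_eq_zero] at this
  exact this.symm

theorem lt_specRad_of_mul_le_mulVec {r : ℝ} {z : V → ℝ} (hz : ∀ v, 0 ≤ z v)
    (hle : ∀ v, r * z v ≤ (G.adjMatrix ℝ *ᵥ z) v) {u : V} (hu : 0 < z u)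
    (hlt : r * z u < (G.adjMatrix ℝ *ᵥ z) u) : r < specRad G := by
  have zz_pos : 0 < z ⬝ᵥ z :=
    Finset.sum_pos' (fun v _ => mul_self_nonneg _) ⟨u, Finset.mem_univ u, mul_pos hu hu⟩
  refine lt_of_mul_lt_mul_right (lt_of_lt_of_le ?_ (dotProduct_adjMatrix_mulVec_le G z)) zz_pos.le
  calc r * (z ⬝ᵥ z) = ∑ v, z v * (r * z v) := by
        rw [dotProduct, Finset.mul_sum]
        exact Finset.sum_congr rfl fun v _ => by ring
    _ < z ⬝ᵥ G.adjMatrix ℝ *ᵥ z :=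
        Finset.sum_lt_sum (fun v _ => mul_le_mul_of_nonneg_left (hle v) (hz v))
          ⟨u, Finset.mem_univ u, mul_lt_mul_of_pos_left hlt hu⟩

theorem mulVec_comp_symm_eq (e : G ≃g H) {r : ℝ} {f : V → ℝ} (hf : G.adjMatrix ℝ *ᵥ f = r • f) :
    H.adjMatrix ℝ *ᵥ (f ∘ e.symm) = r • (f ∘ e.symm) := by
  ext w
  calc (H.adjMatrix ℝ *ᵥ (f ∘ e.symm)) w = (G.adjMatrix ℝ *ᵥ f) (e.symm w) := by
        refine Fintype.sum_equiv e.symm.toEquiv _ _ fun z => ?_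
        simp [SimpleGraph.adjMatrix_apply, e.symm.map_adj_iff]
    _ = (r • (f ∘ e.symm)) w := congrFun hf (e.symm w)

theorem specRad_congr (e : G ≃g H) : specRad G = specRad H := by
  rw [specRad_eq_sSup, specRad_eq_sSup]
  congr 1
  ext r
  constructor <;> rintro ⟨f, hf, hr⟩
  · exact ⟨_, (e.symm.surjective.right_cancellable (g₂ := (0 : V → ℝ))).not.mpr hf,
      mulVec_comp_symm_eq e hr⟩
  · exact ⟨_, (e.surjective.right_cancellable (g₂ := (0 : W → ℝ))).not.mpr hf,
      mulVec_comp_symm_eq e.symm hr⟩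

/-- The Perron eigenvector of `G`, scaled to have its largest entry, equal to `1`, at `u`. -/
structure IsPerronVector (G : SimpleGraph V) (x : V → ℝ) (u : V) : Prop where
  mulVec_eq : G.adjMatrix ℝ *ᵥ x = specRad G • x
  nonneg : ∀ v, 0 ≤ x v
  le_one : ∀ v, x v ≤ 1
  apply_eq_one : x u = 1

theorem mulVec_abs_eq_of_mulVec_eq {f : V → ℝ} (hf : G.adjMatrix ℝ *ᵥ f = specRad G • f) :
    G.adjMatrix ℝ *ᵥ |f| = specRad G • |f| := by
  have abs_dotProduct_abs : |f| ⬝ᵥ |f| = f ⬝ᵥ f :=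
    Finset.sum_congr rfl fun v _ => abs_mul_abs_self (f v)
  refine mulVec_eq_of_dotProduct_eq ((dotProduct_adjMatrix_mulVec_le G |f|).antisymm ?_)
  calc specRad G * (|f| ⬝ᵥ |f|) = f ⬝ᵥ G.adjMatrix ℝ *ᵥ f := by
        rw [abs_dotProduct_abs, hf, dotProduct_smul, smul_eq_mul]
    _ ≤ |f| ⬝ᵥ G.adjMatrix ℝ *ᵥ |f| := by
        simp only [dotProduct, SimpleGraph.adjMatrix_mulVec_apply, Finset.mul_sum, ← abs_mul,
          Pi.abs_apply]
        gcongr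
        exact le_abs_self _

theorem exists_isPerronVector [Nonempty V] (G : SimpleGraph V) : ∃ x u, IsPerronVector G x u := by
  obtain ⟨f, hf, heig⟩ := exists_mulVec_eq_specRad_smul G
  obtain ⟨u, hu⟩ := Finite.exists_max |f|
  have hpos : 0 < |f| u := by
    obtain ⟨v, hv⟩ := Function.ne_iff.mp hf
    exact (abs_pos.mpr hv).trans_le (hu v)
  refine ⟨(|f| u)⁻¹ • |f|, u, ?_, fun v => ?_, fun v => ?_, inv_mul_cancel₀ hpos.ne'⟩
  · rw [mulVec_smul, mulVec_abs_eq_of_mulVec_eq heig, smul_comm]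
  · exact mul_nonneg (inv_nonneg.mpr hpos.le) (abs_nonneg _)
  · exact inv_mul_le_one_of_le₀ (hu v) hpos.le

theorem IsPerronVector.sum_neighborFinset {x : V → ℝ} {u : V} (hx : IsPerronVector G x u) (v : V) :
    ∑ w ∈ G.neighborFinset v, x w = specRad G * x v := by
  rw [← SimpleGraph.adjMatrix_mulVec_apply, hx.mulVec_eq, Pi.smul_apply, smul_eq_mul]

end SpectralRadius

section Rehang

open Matrix

variable {V : Type*} {G : SimpleGraph V} {u v : V} {m : ℕ}

/-- `G` with all edges at `v` replaced by the single edge `uv`. -/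
def rehang (G : SimpleGraph V) (u v : V) : SimpleGraph V :=
  G.deleteIncidenceSet v ⊔ SimpleGraph.edge u v

theorem rehang_adj (huv : u ≠ v) {a b : V} :
    (rehang G u v).Adj a b ↔ (G.Adj a b ∧ a ≠ v ∧ b ≠ v) ∨ (a = u ∧ b = v) ∨ (a = v ∧ b = u) := by
  rw [rehang, SimpleGraph.sup_adj, SimpleGraph.deleteIncidenceSet_adj, SimpleGraph.edge_adj]
  have := huv.symm
  grind

theorem HasEDC.of_rehang (huv : u ≠ v) (h : HasEDC (rehang G u v) m) : HasEDC G m := by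
  refine h.of_edges_mem fun a w hw e he => ?_
  have notMem_support : v ∉ w.support := fun hv => by
    have neighborSet_subset : w.toSubgraph.neighborSet v ⊆ {u} := fun b hb => by
      have := (rehang_adj huv).mp hb.adj_sub
      grind
    have := Set.ncard_le_ncard neighborSet_subset
    rw [hw.ncard_neighborSet_toSubgraph_eq_two hv, Set.ncard_singleton] at this
    lia
  induction e with | _ a b
  have ha : a ≠ v := fun h => notMem_support (h ▸ w.fst_mem_support_of_mem_edges he)
  have hb : b ≠ v := fun h => notMem_support (h ▸ w.snd_mem_support_of_mem_edges he)
  have := (rehang_adj huv).mp (w.edges_subset_edgeSet he)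
  rw [SimpleGraph.mem_edgeSet]
  tauto

theorem adjMatrix_rehang (huv : u ≠ v) : (rehang G u v).adjMatrix ℝ = G.adjMatrix ℝ +
    vecMulVec (Pi.single v 1) (Pi.single u 1 - G.adjMatrix ℝ v) +
    vecMulVec (Pi.single u 1 - G.adjMatrix ℝ v) (Pi.single v 1) := by
  ext a b
  have := G.loopless.irrefl v
  have := G.adj_comm v a
  simp only [Matrix.add_apply, vecMulVec_apply, Pi.sub_apply, Pi.single_apply,
    SimpleGraph.adjMatrix_apply, rehang_adj huv]
  grind

variable [Fintype V]

theorem dotProduct_adjMatrix_rehang_mulVec (huv : u ≠ v) (x : V → ℝ) :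
    x ⬝ᵥ (rehang G u v).adjMatrix ℝ *ᵥ x =
      x ⬝ᵥ G.adjMatrix ℝ *ᵥ x + 2 * (x v * (x u - (G.adjMatrix ℝ *ᵥ x) v)) := by
  have row_dotProduct : (Pi.single u 1 - G.adjMatrix ℝ v) ⬝ᵥ x = x u - (G.adjMatrix ℝ *ᵥ x) v := by
    rw [sub_dotProduct, single_one_dotProduct, mulVec]
  rw [adjMatrix_rehang huv, add_mulVec, add_mulVec, dotProduct_add, dotProduct_add,
    vecMulVec_mulVec, vecMulVec_mulVec]
  simp only [op_smul_eq_smul, dotProduct_smul, row_dotProduct, single_one_dotProduct,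
    dotProduct_single_one, dotProduct_comm x (_ - _), smul_eq_mul]
  ring

theorem IsPerronVector.one_lt_specRad_mul {x : V → ℝ} (hx : IsPerronVector G x u)
    (hG : ¬HasEDC G m) (hmax : ∀ G' : SimpleGraph V, ¬HasEDC G' m → specRad G' ≤ specRad G)
    (huv : u ≠ v) (hadj : ¬G.Adj u v) : 1 < specRad G * x v := by
  by_contra! hle
  have specRad_le := hmax (rehang G u v) fun h => hG (h.of_rehang huv)
  have form_eq := dotProduct_adjMatrix_rehang_mulVec (G := G) huv x
  simp only [hx.mulVec_eq, dotProduct_smul, Pi.smul_apply, smul_eq_mul, hx.apply_eq_one] at form_eq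
  have form_le := dotProduct_adjMatrix_mulVec_le (rehang G u v) x
  have xx_pos : 0 < x ⬝ᵥ x :=
    dotProduct_self_star_pos_iff.mpr fun h => by simpa [h] using hx.apply_eq_one
  have gain := mul_nonneg (hx.nonneg v) (sub_nonneg.mpr hle)
  have specRad_eq : specRad (rehang G u v) = specRad G :=
    specRad_le.antisymm (le_of_mul_le_mul_right (by linarith) xx_pos)
  have eigen := mulVec_eq_of_dotProduct_eq (G := rehang G u v) (f := x)
    (form_le.antisymm (by rw [specRad_eq]; linarith))
  rw [specRad_eq, ← hx.mulVec_eq, adjMatrix_rehang huv, add_mulVec, add_mulVec, add_assoc,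
    add_eq_left, vecMulVec_mulVec, vecMulVec_mulVec] at eigen
  have row_eq : (Pi.single u 1 - G.adjMatrix ℝ v) ⬝ᵥ x = 1 - specRad G * x v := by
    rw [sub_dotProduct, single_one_dotProduct, hx.apply_eq_one]
    exact congrArg (1 - ·) (congrFun hx.mulVec_eq v)
  have apply_v : x v = 0 := by simpa [huv, mt G.adj_symm hadj] using congrFun eigen u
  simpa [row_eq, apply_v] using congrFun eigen v

end Rehang

section Dominance

open Matrix

variable {V : Type*} [Fintype V] {G : SimpleGraph V} {c : ℕ} {u z : V} {x : V → ℝ}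

theorem sum_sum_adjMatrix_union {V : Type*} {G : SimpleGraph V} {S T : Finset V}
    (hST : Disjoint S T) :
    ∑ v ∈ S ∪ T, ∑ w ∈ S ∪ T, G.adjMatrix ℝ v w = ∑ v ∈ S, ∑ w ∈ S, G.adjMatrix ℝ v w +
      2 * ∑ v ∈ S, ∑ w ∈ T, G.adjMatrix ℝ v w + ∑ v ∈ T, ∑ w ∈ T, G.adjMatrix ℝ v w := by
  have swap : ∑ v ∈ T, ∑ w ∈ S, G.adjMatrix ℝ v w = ∑ v ∈ S, ∑ w ∈ T, G.adjMatrix ℝ v w := by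
    refine Finset.sum_comm.trans (Finset.sum_congr rfl fun v _ => ?_)
    simp only [G.isSymm_adjMatrix.apply]
  simp only [Finset.sum_union hST, Finset.sum_add_distrib, swap]
  ring

theorem adjMatrix_nonneg {V : Type*} (G : SimpleGraph V) (v w : V) : 0 ≤ G.adjMatrix ℝ v w := by
  rw [SimpleGraph.adjMatrix_apply]
  positivity

theorem sum_sum_adjMatrix_nonneg {V : Type*} (G : SimpleGraph V) (S T : Finset V) :
    0 ≤ ∑ v ∈ S, ∑ w ∈ T, G.adjMatrix ℝ v w :=
  Finset.sum_nonneg fun v _ => Finset.sum_nonneg fun w _ => adjMatrix_nonneg G v w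

theorem sum_adjMatrix_eq_card_inter (v : V) (S : Finset V) :
    ∑ w ∈ S, G.adjMatrix ℝ v w = (S ∩ G.neighborFinset v).card := by
  simp only [SimpleGraph.adjMatrix_apply, Finset.sum_boole]
  congr 2
  ext w
  simp

theorem IsSparse.card_inter_neighborFinset_le (hG : IsSparse G c) (huz : u ≠ z) :
    ((G.neighborFinset u ∩ G.neighborFinset z).card : ℝ) ≤ c + 2 := by
  obtain ⟨C, hC⟩ : ∃ C, C = G.neighborFinset u ∩ G.neighborFinset z := ⟨_, rfl⟩
  have disj : Disjoint {u, z} C := by simp [hC]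
  have sparse := hG ({u, z} ∪ C)
  have cross : ∑ v ∈ {u, z}, ∑ w ∈ C, G.adjMatrix ℝ v w = 2 * C.card := by
    rw [Finset.sum_pair huz, sum_adjMatrix_eq_card_inter, sum_adjMatrix_eq_card_inter,
      Finset.inter_eq_left.mpr (hC ▸ Finset.inter_subset_left),
      Finset.inter_eq_left.mpr (hC ▸ Finset.inter_subset_right), two_mul]
  rw [sum_sum_adjMatrix_union disj, Finset.card_union_of_disjoint disj, Finset.card_pair huz,
    cross] at sparse
  have := sum_sum_adjMatrix_nonneg G {u, z} {u, z}
  have := sum_sum_adjMatrix_nonneg G C C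
  push_cast at sparse
  rw [← hC]
  linarith

theorem IsSparse.sum_sum_erase_le (hG : IsSparse G c) (u : V) :
    ∑ v ∈ Finset.univ.erase u, ∑ w ∈ Finset.univ.erase u, G.adjMatrix ℝ v w ≤
      2 * (Fintype.card V + c - G.degree u) := by
  obtain ⟨U, hU⟩ : ∃ U, U = Finset.univ.erase u := ⟨_, rfl⟩
  have sparse := hG ({u} ∪ U)
  have cross : ∑ v ∈ {u}, ∑ w ∈ U, G.adjMatrix ℝ v w = G.degree u := by
    rw [Finset.sum_singleton, sum_adjMatrix_eq_card_inter, Finset.inter_eq_right.mpr]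
    · rfl
    · intro w hw
      simpa [hU] using (G.mem_neighborFinset u w).mp hw |>.ne'
  rw [sum_sum_adjMatrix_union (by simp [hU]), cross, ← Finset.insert_eq, hU,
    Finset.insert_erase (Finset.mem_univ u), Finset.card_univ] at sparse
  have := sum_sum_adjMatrix_nonneg G {u} {u}
  linarith

theorem IsSparse.sum_erase_le (hG : IsSparse G c) (hzu : z ≠ u) :
    ∑ w ∈ Finset.univ.erase u, G.adjMatrix ℝ z w ≤ Fintype.card V + c - G.degree u := by
  have sparse := hG.sum_sum_erase_le u
  obtain ⟨U, hU⟩ : ∃ U, U = Finset.univ.erase u := ⟨_, rfl⟩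
  have hz : z ∈ U := by simp [hU, hzu]
  have cross : ∑ v ∈ {z}, ∑ w ∈ U.erase z, G.adjMatrix ℝ v w = ∑ w ∈ U, G.adjMatrix ℝ z w := by
    rw [Finset.sum_singleton, Finset.sum_erase _ (by simp)]
  have decomp := sum_sum_adjMatrix_union (G := G) (S := {z}) (T := U.erase z) (by simp)
  rw [cross, ← Finset.insert_eq, Finset.insert_erase hz] at decomp
  have := sum_sum_adjMatrix_nonneg G {z} {z}
  have := sum_sum_adjMatrix_nonneg G (U.erase z) (U.erase z)
  rw [← hU] at sparse ⊢
  linarith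

theorem IsPerronVector.specRad_mul_sum_le (hx : IsPerronVector G x u) (hG : IsSparse G c) {t : ℝ}
    (ht : 0 < t) :
    specRad G * ∑ v, x v ≤ (1 + t) * (Fintype.card V + c) + (∑ v, x v) / t + c := by
  -- The few edges within the set `B` of large entries have `x v + x w ≤ 2`, all others `≤ 1 + t`.
  obtain ⟨B, hB⟩ : ∃ B : Finset V, ∀ v, v ∈ B ↔ t ≤ x v := ⟨Finset.univ.filter (t ≤ x ·), by simp⟩
  have card_le : (B.card : ℝ) ≤ (∑ v, x v) / t := by
    rw [le_div_iff₀ ht, ← nsmul_eq_mul]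
    exact (Finset.card_nsmul_le_sum B x t fun v hv => (hB v).mp hv).trans
      (Finset.sum_le_sum_of_subset_of_nonneg B.subset_univ fun v _ _ => hx.nonneg v)
  have sum_right : ∑ v, ∑ w, G.adjMatrix ℝ v w * x w = specRad G * ∑ v, x v := by
    rw [Finset.mul_sum]
    exact Finset.sum_congr rfl fun v _ => congrFun hx.mulVec_eq v
  have sum_left : ∑ v, ∑ w, G.adjMatrix ℝ v w * x v = specRad G * ∑ v, x v := by
    rw [← sum_right, Finset.sum_comm]
    simp only [G.isSymm_adjMatrix.apply]
  have entry_le (v w : V) : G.adjMatrix ℝ v w * x v + G.adjMatrix ℝ v w * x w ≤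
      (1 + t) * G.adjMatrix ℝ v w + if v ∈ B ∧ w ∈ B then G.adjMatrix ℝ v w else 0 := by
    have := hx.le_one v
    have := hx.le_one w
    simp only [SimpleGraph.adjMatrix_apply, hB]
    split_ifs <;> grind only
  have sum_le : 2 * (specRad G * ∑ v, x v) ≤ (1 + t) * ∑ v, ∑ w, G.adjMatrix ℝ v w +
      ∑ v ∈ B, ∑ w ∈ B, G.adjMatrix ℝ v w := by
    calc 2 * (specRad G * ∑ v, x v)
        = ∑ v, ∑ w, (G.adjMatrix ℝ v w * x v + G.adjMatrix ℝ v w * x w) := by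
          simp only [Finset.sum_add_distrib, sum_left, sum_right, two_mul]
      _ ≤ _ := Finset.sum_le_sum fun v _ => Finset.sum_le_sum fun w _ => entry_le v w
      _ = _ := by
          simp only [Finset.sum_add_distrib, Finset.mul_sum, ite_and, Finset.sum_ite_irrel,
            Finset.sum_ite_mem, Finset.sum_const_zero, Finset.univ_inter]
  have sparse_univ := hG Finset.univ
  have sparse_B := hG B
  rw [Finset.card_univ] at sparse_univ
  have := mul_le_mul_of_nonneg_left sparse_univ (by linarith : 0 ≤ 1 + t)
  linarith

theorem IsPerronVector.specRad_mul_one_add_le (hx : IsPerronVector G x u) (hG : IsSparse G c)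
    (huz : u ≠ z) : specRad G * (1 + x z) ≤ ∑ v, x v + (c + 2) := by
  have inter_le : ∑ w ∈ G.neighborFinset u ∩ G.neighborFinset z, x w ≤ c + 2 := by
    refine le_trans ?_ (hG.card_inter_neighborFinset_le huz)
    simpa using Finset.sum_le_card_nsmul _ x 1 fun w _ => hx.le_one w
  have union_le : ∑ w ∈ G.neighborFinset u ∪ G.neighborFinset z, x w ≤ ∑ v, x v :=
    Finset.sum_le_sum_of_subset_of_nonneg (Finset.subset_univ _) fun v _ _ => hx.nonneg v
  have := Finset.sum_union_inter (s₁ := G.neighborFinset u) (s₂ := G.neighborFinset z) (f := x)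
  rw [hx.sum_neighborFinset, hx.sum_neighborFinset, hx.apply_eq_one] at this
  linarith

theorem IsPerronVector.apply_le_third (hx : IsPerronVector G x u) (hG : IsSparse G 24)
    (hρ : 165 ≤ specRad G) (hn : Fintype.card V ≤ specRad G ^ 2 + 1) (huz : u ≠ z) :
    x z ≤ 1 / 3 := by
  by_contra! hlt
  have sum_lower : 4 / 3 * specRad G - 26 ≤ ∑ v, x v := by
    have := hx.specRad_mul_one_add_le hG huz
    push_cast at this
    nlinarith
  have sum_upper := hx.specRad_mul_sum_le hG (t := 1 / 15) (by norm_num)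
  push_cast at sum_upper
  have := mul_le_mul_of_nonneg_left sum_lower (by linarith : 0 ≤ specRad G - 15)
  nlinarith

theorem IsPerronVector.specRad_mul_le (hx : IsPerronVector G x u) {M : ℝ}
    (hM : ∀ y, y ≠ u → x y ≤ M) (z : V) :
    specRad G * x z ≤ G.adjMatrix ℝ z u + M * ∑ y ∈ Finset.univ.erase u, G.adjMatrix ℝ z y := by
  have eigen : ∑ y, G.adjMatrix ℝ z y * x y = specRad G * x z := congrFun hx.mulVec_eq z
  rw [← eigen, ← Finset.add_sum_erase _ _ (Finset.mem_univ u), hx.apply_eq_one, mul_one,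
    Finset.mul_sum]
  refine add_le_add_right (Finset.sum_le_sum fun y hy => ?_) _
  rw [mul_comm M]
  exact mul_le_mul_of_nonneg_left (hM y (Finset.ne_of_mem_erase hy)) (adjMatrix_nonneg G z y)

theorem IsPerronVector.degree_ge (hx : IsPerronVector G x u) (hG : IsSparse G 24)
    (hρ : 165 ≤ specRad G) (hn : Fintype.card V ≤ specRad G ^ 2 + 1)
    (hlarge : ∀ v, u ≠ v → ¬G.Adj u v → 1 < specRad G * x v) :
    (Fintype.card V : ℝ) ≤ G.degree u + 51 := by
  obtain ⟨S, hS⟩ : ∃ S, S = (insert u (G.neighborFinset u))ᶜ := ⟨_, rfl⟩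
  have card_S : (S.card : ℝ) + (G.degree u + 1) = Fintype.card V := by
    rw [← Finset.card_compl_add_card (insert u (G.neighborFinset u)),
      Finset.card_insert_of_notMem (by simp), ← hS]
    push_cast
    rfl
  have one_le (w : V) (hw : w ∈ S) :
      1 ≤ 1 / 3 * ∑ y ∈ Finset.univ.erase u, G.adjMatrix ℝ w y := by
    have hw : w ≠ u ∧ ¬G.Adj u w := by simpa [hS] using hw
    have specRad_mul_le := hx.specRad_mul_le (fun y hy => hx.apply_le_third hG hρ hn hy.symm) w
    rw [SimpleGraph.adjMatrix_apply, if_neg (mt G.adj_symm hw.2), zero_add] at specRad_mul_le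
    exact (hlarge w hw.1.symm hw.2).le.trans specRad_mul_le
  have card_le := Finset.card_nsmul_le_sum S _ 1 one_le
  have sum_S_le : ∑ w ∈ S, ∑ y ∈ Finset.univ.erase u, G.adjMatrix ℝ w y ≤
      ∑ w ∈ Finset.univ.erase u, ∑ y ∈ Finset.univ.erase u, G.adjMatrix ℝ w y :=
    Finset.sum_le_sum_of_subset_of_nonneg (fun w => by simp +contextual [hS]) fun w _ _ =>
      Finset.sum_nonneg fun y _ => adjMatrix_nonneg G w y
  have sparse := hG.sum_sum_erase_le u
  rw [nsmul_eq_mul, mul_one, ← Finset.mul_sum] at card_le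
  push_cast at sparse
  linarith

theorem IsPerronVector.adj_of_isSparse (hx : IsPerronVector G x u) (hG : IsSparse G 24)
    (hρ : 165 ≤ specRad G) (hn : Fintype.card V ≤ specRad G ^ 2 + 1)
    (hlarge : ∀ v, u ≠ v → ¬G.Adj u v → 1 < specRad G * x v) {v : V} (huv : u ≠ v) :
    G.Adj u v := by
  by_contra hnadj
  have degree_ge := hx.degree_ge hG hρ hn hlarge
  obtain ⟨z, hz, hmax⟩ := (Finset.univ.erase u).exists_max_image x ⟨v, by simp [huv.symm]⟩
  have le_max (y : V) (hy : y ≠ u) : x y ≤ x z := hmax y (by simp [hy])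
  have sum_le {w : V} (hw : w ≠ u) : ∑ y ∈ Finset.univ.erase u, G.adjMatrix ℝ w y ≤ 75 := by
    have := hG.sum_erase_le hw
    push_cast at this
    linarith
  have at_z := hx.specRad_mul_le le_max z
  have at_v := (hlarge v huv hnadj).trans_le (hx.specRad_mul_le le_max v)
  have := mul_le_mul_of_nonneg_left (sum_le (Finset.ne_of_mem_erase hz)) (hx.nonneg z)
  have := mul_le_mul_of_nonneg_left (sum_le huv.symm) (hx.nonneg z)
  have le_one : G.adjMatrix ℝ z u ≤ 1 := by
    rw [SimpleGraph.adjMatrix_apply]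
    split_ifs <;> norm_num
  rw [SimpleGraph.adjMatrix_apply, if_neg (mt G.adj_symm hnadj), zero_add] at at_v
  nlinarith [hx.nonneg z]

end Dominance

section Cone

open Matrix

variable {W : Type*} {H : SimpleGraph W} {v w : W}

theorem joinK1_adj_none_some : (joinK1 H).Adj none (some v) := by
  simp [joinK1]

theorem joinK1_adj_some_some : (joinK1 H).Adj (some v) (some w) ↔ H.Adj v w := by
  simp only [joinK1, SimpleGraph.fromRel_adj, reduceCtorEq, false_or, Option.some.injEq]
  exact ⟨by grind [SimpleGraph.Adj.symm], fun h => ⟨by simpa using h.ne, by grind⟩⟩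

theorem exists_iso_joinK1 {V : Type*} {G : SimpleGraph V} {u : V} (hu : ∀ v, u ≠ v → G.Adj u v) :
    ∃ e : G ≃g joinK1 (G.induce {v | v ≠ u}), e u = none := by
  refine ⟨RelIso.symm ⟨Equiv.optionSubtypeNe u, @fun a b => ?_⟩,
    Equiv.optionSubtypeNe_symm_self u⟩
  cases a with
  | none =>
    cases b with
    | none => simp
    | some b => exact iff_of_true (hu b b.2.symm) joinK1_adj_none_some
  | some a =>
    cases b with
    | none => exact iff_of_true (hu a a.2.symm).symm joinK1_adj_none_some.symm
    | some b => exact (joinK1_adj_some_some (H := G.induce {v | v ≠ u}) (v := a) (w := b)).symm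

theorem nonempty_joinK1_iso {W' : Type*} {H' : SimpleGraph W'} (e : H ≃g H') :
    Nonempty (joinK1 H ≃g joinK1 H') := by
  refine ⟨⟨Equiv.optionCongr e.toEquiv, @fun a b => ?_⟩⟩
  cases a <;> cases b <;>
    simp [joinK1_adj_none_some, joinK1_adj_none_some.symm, joinK1_adj_some_some, e.map_adj_iff]

variable [Fintype W]

theorem joinK1_mulVec_none (x : Option W → ℝ) :
    ((joinK1 H).adjMatrix ℝ *ᵥ x) none = ∑ v, x (some v) := by
  simp [mulVec, dotProduct, Fintype.sum_option, joinK1_adj_none_some]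

theorem joinK1_mulVec_some (x : Option W → ℝ) (v : W) :
    ((joinK1 H).adjMatrix ℝ *ᵥ x) (some v) = x none + (H.adjMatrix ℝ *ᵥ fun w => x (some w)) v := by
  simp only [mulVec, dotProduct, Fintype.sum_option, SimpleGraph.adjMatrix_apply,
    joinK1_adj_none_some.symm, joinK1_adj_some_some, if_true, one_mul]

theorem sum_adjMatrix_mulVec (H : SimpleGraph W) (f : W → ℝ) :
    ∑ v, (H.adjMatrix ℝ *ᵥ f) v = ∑ v, H.degree v * f v := by
  rw [← one_dotProduct, dotProduct_mulVec]
  refine Finset.sum_congr rfl fun v _ => ?_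
  simp [SimpleGraph.adjMatrix_vecMul_apply]

theorem lt_specRad_joinK1 {r : ℝ} (hr : 0 < r) (h : r ^ 2 * (r ^ 2 - Fintype.card W) <
    r * ∑ v, (H.degree v : ℝ) + ∑ v, (H.degree v : ℝ) ^ 2) : r < specRad (joinK1 H) := by
  obtain ⟨d, hd⟩ : ∃ d : W → ℝ, d = fun v => (H.degree v : ℝ) := ⟨_, rfl⟩
  obtain ⟨A, hA⟩ : ∃ A, A = H.adjMatrix ℝ := ⟨_, rfl⟩
  have mulVec_one : A *ᵥ 1 = d := by ext v; simp [hA, hd, Pi.one_def]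
  have mulVec_nonneg {f : W → ℝ} (hf : 0 ≤ f) : 0 ≤ A *ᵥ f := fun v =>
    Finset.sum_nonneg fun w _ => mul_nonneg (hA ▸ adjMatrix_nonneg H v w) (hf w)
  have d_nonneg : 0 ≤ d := fun v => by simp [hd]
  have Ad_nonneg := mulVec_nonneg d_nonneg
  -- The Perron vector of the cone, scaled to `r ^ 3` at the apex and expanded in `1 / r`.
  obtain ⟨z, hz⟩ : ∃ z : W → ℝ, z = r ^ 2 • 1 + r • d + A *ᵥ d := ⟨_, rfl⟩
  have z_nonneg : 0 ≤ z := by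
    rw [hz]
    exact add_nonneg (add_nonneg (smul_nonneg (sq_nonneg r) zero_le_one)
      (smul_nonneg hr.le d_nonneg)) Ad_nonneg
  have mulVec_z : A *ᵥ z = r ^ 2 • d + r • A *ᵥ d + A *ᵥ A *ᵥ d := by
    rw [hz, mulVec_add, mulVec_add, mulVec_smul, mulVec_smul, mulVec_one]
  have sum_z : ∑ v, z v = r ^ 2 * Fintype.card W + r * ∑ v, d v + ∑ v, d v ^ 2 := by
    have : ∑ v, (A *ᵥ d) v = ∑ v, d v ^ 2 := by
      rw [hA, sum_adjMatrix_mulVec, hd]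
      exact Finset.sum_congr rfl fun v _ => (sq _).symm
    simp [hz, Finset.sum_add_distrib, ← Finset.mul_sum, this, mul_comm]
  have apex_lt : r * r ^ 3 < ∑ v, z v := by
    rw [sum_z, hd]
    linarith
  refine lt_specRad_of_mul_le_mulVec (z := fun o => o.elim (r ^ 3) z) (u := none)
    (fun o => ?_) (fun o => ?_) (pow_pos hr 3) (by rwa [joinK1_mulVec_none])
  · cases o with
    | none => exact pow_nonneg hr.le 3
    | some v => exact z_nonneg v
  · cases o with
    | none => rw [joinK1_mulVec_none]; exact apex_lt.le
    | some v =>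
      have := mulVec_nonneg Ad_nonneg v
      simp only [joinK1_mulVec_some, Option.elim, ← hA, mulVec_z]
      simp only [hz, Pi.add_apply, Pi.smul_apply, Pi.one_apply, Pi.zero_apply, smul_eq_mul]
        at this ⊢
      linarith

theorem IsPerronVector.specRad_joinK1_mul_le {x : Option W → ℝ}
    (hx : IsPerronVector (joinK1 H) x none) {Δ : ℕ} (hΔ : ∀ v, H.degree v ≤ Δ)
    (hr : Δ < specRad (joinK1 H)) :
    specRad (joinK1 H) * (specRad (joinK1 H) ^ 2 - Fintype.card W) ≤
      ∑ v, (H.degree v : ℝ) + (∑ v, (H.degree v : ℝ) ^ 2) / (specRad (joinK1 H) - Δ) := by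
  obtain ⟨r, hr_eq⟩ : ∃ r, r = specRad (joinK1 H) := ⟨_, rfl⟩
  obtain ⟨y, hy⟩ : ∃ y : W → ℝ, y = fun v => x (some v) := ⟨_, rfl⟩
  obtain ⟨A, hA⟩ : ∃ A, A = H.adjMatrix ℝ := ⟨_, rfl⟩
  have mulVec_le {M : ℝ} (hM : ∀ v, y v ≤ M) (v : W) : (A *ᵥ y) v ≤ H.degree v * M := by
    rw [hA, SimpleGraph.adjMatrix_mulVec_apply, ← nsmul_eq_mul]
    exact Finset.sum_le_card_nsmul _ _ _ fun w _ => hM w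
  have y_nonneg (v : W) : 0 ≤ y v := by rw [hy]; exact hx.nonneg _
  have eigen_some (v : W) : r * y v = 1 + (A *ᵥ y) v := by
    have := congrFun hx.mulVec_eq (some v)
    rw [joinK1_mulVec_some, hx.apply_eq_one] at this
    rw [hr_eq, hA, hy, this, Pi.smul_apply, smul_eq_mul]
  have eigen_none : ∑ v, y v = r := by
    have := congrFun hx.mulVec_eq none
    rw [joinK1_mulVec_none, Pi.smul_apply, hx.apply_eq_one, smul_eq_mul, mul_one] at this
    rw [hy, this, hr_eq]
  rw [← hr_eq] at hr ⊢
  have y_le (v : W) : y v ≤ (r - Δ)⁻¹ := by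
    have : Nonempty W := ⟨v⟩
    obtain ⟨m, hm⟩ := Finite.exists_max y
    refine (hm v).trans ?_
    have := mul_le_mul_of_nonneg_right (Nat.cast_le (α := ℝ).mpr (hΔ m)) (y_nonneg m)
    rw [inv_eq_one_div, le_div_iff₀ (sub_pos.mpr hr)]
    linarith [eigen_some m, mulVec_le hm m]
  have sq_eq : r ^ 2 - Fintype.card W = ∑ v, H.degree v * y v := by
    rw [← sum_adjMatrix_mulVec, ← hA, sub_eq_iff_eq_add', sq]
    nth_rw 2 [← eigen_none]
    simp only [Finset.mul_sum, eigen_some, Finset.sum_add_distrib, Finset.sum_const,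
      Finset.card_univ, nsmul_eq_mul, mul_one]
  calc r * (r ^ 2 - Fintype.card W) = ∑ v, H.degree v * (r * y v) := by
        rw [sq_eq, Finset.mul_sum]
        exact Finset.sum_congr rfl fun v _ => by ring
    _ ≤ ∑ v, (H.degree v + H.degree v ^ 2 * (r - Δ)⁻¹) := by
        gcongr with v
        rw [eigen_some, mul_one_add, sq, mul_assoc]
        gcongr
        exact mulVec_le y_le v
    _ = _ := by rw [Finset.sum_add_distrib, ← Finset.sum_mul, div_eq_mul_inv]

theorem IsPerronVector.comp_symm {V : Type*} [Fintype V] {G : SimpleGraph V} {x : V → ℝ} {u : V}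
    (hx : IsPerronVector G x u) {V' : Type*} [Fintype V'] {G' : SimpleGraph V'} (e : G ≃g G') :
    IsPerronVector G' (x ∘ e.symm) (e u) where
  mulVec_eq := by
    rw [mulVec_comp_symm_eq e hx.mulVec_eq, specRad_congr e]
  nonneg v := hx.nonneg _
  le_one v := hx.le_one _
  apply_eq_one := by simp [hx.apply_eq_one]

end Cone

section Patterns

/-- `E` is the list of edges traversed by some cycle of `G`; a convenient way to exhibit explicit
edge-disjoint cycles. -/
def IsCycleEdgeList {V : Type*} (G : SimpleGraph V) (E : List (Sym2 V)) : Prop :=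
  ∃ (v : V) (p : G.Walk v v), p.IsCycle ∧ p.edges = E

theorem hasEDC_of_pairwise_disjoint {V : Type*} {G : SimpleGraph V} {L : List (List (Sym2 V))}
    (hL : ∀ E ∈ L, IsCycleEdgeList G E) (hdisj : L.Pairwise List.Disjoint) :
    HasEDC G L.length := by
  have hcycle (i : Fin L.length) : ∃ c : Σ v, G.Walk v v, c.2.IsCycle ∧ c.2.edges = L.get i := by
    obtain ⟨v, p, hp, hpE⟩ := hL _ (L.get_mem i)
    exact ⟨⟨v, p⟩, hp, hpE⟩
  choose c hc hcE using hcycle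
  refine ⟨c, hc, fun i j hij e hei hej => ?_⟩
  rw [hcE] at hei hej
  rcases lt_or_gt_of_ne hij with h | h
  · exact List.pairwise_iff_get.mp hdisj _ _ h hei hej
  · exact List.pairwise_iff_get.mp hdisj _ _ h hej hei

theorem hasEDC_three {V : Type*} {G : SimpleGraph V} {E₁ E₂ E₃ : List (Sym2 V)}
    (h₁ : IsCycleEdgeList G E₁) (h₂ : IsCycleEdgeList G E₂) (h₃ : IsCycleEdgeList G E₃)
    (hdisj : [E₁, E₂, E₃].Pairwise List.Disjoint) : HasEDC G 3 :=
  hasEDC_of_pairwise_disjoint (by simp [h₁, h₂, h₃]) hdisj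

theorem isCycleEdgeList_triangle {V : Type*} {G : SimpleGraph V} {a b c : V} (hab : G.Adj a b)
    (hbc : G.Adj b c) (hca : G.Adj c a) : IsCycleEdgeList G [s(a, b), s(b, c), s(c, a)] := by
  refine ⟨a, .cons hab (.cons hbc (.cons hca .nil)), ?_, rfl⟩
  rw [SimpleGraph.Walk.cons_isCycle_iff]
  simp [SimpleGraph.Walk.cons_isPath_iff]
  grind [hab.ne, hbc.ne, hca.ne]

theorem isCycleEdgeList_square {V : Type*} {G : SimpleGraph V} {a b c d : V} (hab : G.Adj a b)
    (hbc : G.Adj b c) (hcd : G.Adj c d) (hda : G.Adj d a) (hac : a ≠ c) (hbd : b ≠ d) :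
    IsCycleEdgeList G [s(a, b), s(b, c), s(c, d), s(d, a)] := by
  refine ⟨a, .cons hab (.cons hbc (.cons hcd (.cons hda .nil))), ?_, rfl⟩
  rw [SimpleGraph.Walk.cons_isCycle_iff]
  simp [SimpleGraph.Walk.cons_isPath_iff]
  grind [hab.ne, hbc.ne, hcd.ne, hda.ne]

variable {W : Type*} {H : SimpleGraph W} {a b c d e f : W}

theorem isCycleEdgeList_joinK1_triangle (hab : H.Adj a b) (hbc : H.Adj b c) (hca : H.Adj c a) :
    IsCycleEdgeList (joinK1 H) [s(some a, some b), s(some b, some c), s(some c, some a)] :=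
  isCycleEdgeList_triangle (joinK1_adj_some_some.mpr hab) (joinK1_adj_some_some.mpr hbc)
    (joinK1_adj_some_some.mpr hca)

theorem isCycleEdgeList_joinK1_edge (hab : H.Adj a b) :
    IsCycleEdgeList (joinK1 H) [s(none, some a), s(some a, some b), s(some b, none)] :=
  isCycleEdgeList_triangle joinK1_adj_none_some (joinK1_adj_some_some.mpr hab)
    joinK1_adj_none_some.symm

theorem isCycleEdgeList_joinK1_cherry (hab : H.Adj a b) (hac : H.Adj a c) (hbc : b ≠ c) :
    IsCycleEdgeList (joinK1 H)
      [s(none, some b), s(some b, some a), s(some a, some c), s(some c, none)] :=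
  isCycleEdgeList_square joinK1_adj_none_some (joinK1_adj_some_some.mpr hab.symm)
    (joinK1_adj_some_some.mpr hac) joinK1_adj_none_some.symm (Option.some_ne_none a).symm
    (by simpa using hbc)

theorem hasEDC_joinK1_of_matching (hn : [a, b, c, d, e, f].Nodup) (hab : H.Adj a b)
    (hcd : H.Adj c d) (hef : H.Adj e f) : HasEDC (joinK1 H) 3 := by
  refine hasEDC_three (isCycleEdgeList_joinK1_edge hab)
    (isCycleEdgeList_joinK1_edge hcd)
    (isCycleEdgeList_joinK1_edge hef) ?_
  simp only [List.pairwise_cons, List.Disjoint, List.mem_cons, List.not_mem_nil, or_false,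
    forall_eq_or_imp, forall_eq, Sym2.eq_iff, Option.some.injEq, reduceCtorEq]
  grind

theorem hasEDC_joinK1_of_claw_edge (hn : [a, b, c, d, e, f].Nodup) (hab : H.Adj a b)
    (hac : H.Adj a c) (had : H.Adj a d) (hef : H.Adj e f) : HasEDC (joinK1 H) 3 := by
  simp only [List.nodup_cons, List.mem_cons, List.not_mem_nil, not_or, or_false] at hn
  refine hasEDC_three (isCycleEdgeList_joinK1_edge hef)
    (isCycleEdgeList_joinK1_edge hab)
    (isCycleEdgeList_joinK1_cherry hac had (by grind)) ?_
  simp only [List.pairwise_cons, List.Disjoint, List.mem_cons, List.not_mem_nil, or_false,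
    forall_eq_or_imp, forall_eq, Sym2.eq_iff, Option.some.injEq, reduceCtorEq]
  grind

theorem hasEDC_joinK1_of_double_star (hn : [a, b, c, d, e, f].Nodup) (hab : H.Adj a b)
    (hac : H.Adj a c) (had : H.Adj a d) (hbe : H.Adj b e)
    (hbf : H.Adj b f) : HasEDC (joinK1 H) 3 := by
  simp only [List.nodup_cons, List.mem_cons, List.not_mem_nil, not_or, or_false] at hn
  refine hasEDC_three (isCycleEdgeList_joinK1_edge hab)
    (isCycleEdgeList_joinK1_cherry hac had (by grind))
    (isCycleEdgeList_joinK1_cherry hbe hbf (by grind)) ?_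
  simp only [List.pairwise_cons, List.Disjoint, List.mem_cons, List.not_mem_nil, or_false,
    forall_eq_or_imp, forall_eq, Sym2.eq_iff, Option.some.injEq, reduceCtorEq]
  grind

theorem hasEDC_joinK1_of_star (hn : [a, b, c, d, e, f].Nodup) (hab : H.Adj a b) (hac : H.Adj a c)
    (had : H.Adj a d) (hae : H.Adj a e) (haf : H.Adj a f) : HasEDC (joinK1 H) 3 := by
  simp only [List.nodup_cons, List.mem_cons, List.not_mem_nil, not_or, or_false] at hn
  refine hasEDC_three (isCycleEdgeList_joinK1_edge hab)
    (isCycleEdgeList_joinK1_cherry hac had (by grind))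
    (isCycleEdgeList_joinK1_cherry hae haf (by grind)) ?_
  simp only [List.pairwise_cons, List.Disjoint, List.mem_cons, List.not_mem_nil, or_false,
    forall_eq_or_imp, forall_eq, Sym2.eq_iff, Option.some.injEq, reduceCtorEq]
  grind

theorem hasEDC_joinK1_of_bull (hn : [a, b, c, d, e].Nodup) (hab : H.Adj a b) (hbc : H.Adj b c)
    (hca : H.Adj c a) (had : H.Adj a d) (hbe : H.Adj b e) : HasEDC (joinK1 H) 3 := by
  refine hasEDC_three (isCycleEdgeList_joinK1_triangle hab hbc hca)
    (isCycleEdgeList_joinK1_edge had)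
    (isCycleEdgeList_joinK1_edge hbe) ?_
  simp only [List.pairwise_cons, List.Disjoint, List.mem_cons, List.not_mem_nil, or_false,
    forall_eq_or_imp, forall_eq, Sym2.eq_iff, Option.some.injEq, reduceCtorEq]
  grind

theorem hasEDC_joinK1_of_clique (hn : [a, b, c, d].Nodup) (hab : H.Adj a b) (hbc : H.Adj b c)
    (hca : H.Adj c a) (had : H.Adj a d) (hbd : H.Adj b d)
    (hcd : H.Adj c d) : HasEDC (joinK1 H) 3 := by
  simp only [List.nodup_cons, List.mem_cons, List.not_mem_nil, not_or, or_false] at hn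
  refine hasEDC_three (isCycleEdgeList_joinK1_triangle hab hbc hca)
    (isCycleEdgeList_joinK1_edge hcd)
    (isCycleEdgeList_joinK1_cherry had.symm hbd.symm hab.ne) ?_
  simp only [List.pairwise_cons, List.Disjoint, List.mem_cons, List.not_mem_nil, or_false,
    forall_eq_or_imp, forall_eq, Sym2.eq_iff, Option.some.injEq, reduceCtorEq]
  grind

end Patterns

section Friendship

variable {m : ℕ}

theorem f2PlusIsolated_adj_iff {i j : Fin m} : (f2PlusIsolated m).Adj i j ↔
    s(i.val, j.val) ∈
      ({s(0, 1), s(0, 2), s(0, 3), s(0, 4), s(1, 2), s(3, 4)} : Set (Sym2 ℕ)) := by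
  simp only [f2PlusIsolated, SimpleGraph.fromRel_adj, Set.mem_insert_iff, Set.mem_singleton_iff,
    Sym2.eq_iff, ne_eq, Fin.ext_iff]
  constructor
  · rintro ⟨-, (h | h | h) | (h | h | h)⟩ <;> omega
  · rintro (h | h | h | h | h | h) <;> omega

theorem degree_f2PlusIsolated {k : ℕ} (i : Fin (5 + k)) :
    (f2PlusIsolated (5 + k)).degree i = if i.val = 0 then 4 else if i.val < 5 then 2 else 0 := by
  rw [← SimpleGraph.card_neighborFinset_eq_degree, SimpleGraph.neighborFinset_eq_filter,
    Finset.card_filter, Fin.sum_univ_add, Fin.sum_univ_five]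
  simp only [f2PlusIsolated_adj_iff, Set.mem_insert_iff, Set.mem_singleton_iff, Sym2.eq_iff,
    Fin.val_castAdd, Fin.val_natAdd]
  refine Fin.addCases (fun a => ?_) (fun b => ?_) i
  · fin_cases a <;> simp <;> grind
  · simp
    grind

theorem sum_degree_f2PlusIsolated {k : ℕ} (f : ℕ → ℝ) (hf : f 0 = 0) :
    ∑ i : Fin (5 + k), f ((f2PlusIsolated (5 + k)).degree i) = f 4 + 4 * f 2 := by
  simp only [degree_f2PlusIsolated, Fin.sum_univ_add, Fin.sum_univ_five]
  simp [hf]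
  ring

theorem lt_specRad_joinK1_f2PlusIsolated (hm : 5 ≤ m) {r : ℝ} (hr : 0 < r)
    (h : r ^ 2 * (r ^ 2 - m) < r * 12 + 32) : r < specRad (joinK1 (f2PlusIsolated m)) := by
  obtain ⟨k, rfl⟩ := Nat.exists_eq_add_of_le hm
  refine lt_specRad_joinK1 hr ?_
  rw [sum_degree_f2PlusIsolated (fun d => (d : ℝ)) Nat.cast_zero,
    sum_degree_f2PlusIsolated (fun d => (d : ℝ) ^ 2) (by simp), Fintype.card_fin]
  norm_num at h ⊢
  exact h

theorem exists_equiv_castLE {W : Type*} [Fintype W] {k m : ℕ} (hm : Fintype.card W = m)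
    (hk : k ≤ m) {f : Fin k → W} (hf : f.Injective) :
    ∃ g : Fin m ≃ W, ∀ i, g (Fin.castLE hk i) = f i := by
  have f_eq (i : Fin k) := (Fin.castLE_injective hk).extend_apply f
    (Fintype.equivFinOfCardEq hm).symm i
  have hinj : Set.InjOn (Function.extend (Fin.castLE hk) f (Fintype.equivFinOfCardEq hm).symm)
      (Set.range (Fin.castLE hk)) := by
    rintro _ ⟨i, rfl⟩ _ ⟨j, rfl⟩ hij
    rw [f_eq, f_eq] at hij
    rw [hf hij]
  obtain ⟨g, hg⟩ := Set.MapsTo.exists_equiv_extend_of_card_eq (t := Finset.univ) (by simp [hm])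
    (fun _ _ => Finset.mem_coe.mpr (Finset.mem_univ _)) hinj
  exact ⟨g.trans (Equiv.subtypeUnivEquiv Finset.mem_univ), fun i =>
    (hg _ ⟨i, rfl⟩).trans (f_eq i)⟩

theorem nonempty_iso_f2PlusIsolated {W : Type*} [Fintype W] {H : SimpleGraph W} {a b c d e : W}
    (hn : [a, b, c, d, e].Nodup)
    (hH : H.edgeSet = {s(a, b), s(a, c), s(a, d), s(a, e), s(b, c), s(d, e)}) :
    Nonempty (H ≃g f2PlusIsolated (Fintype.card W)) := by
  have hcard : 5 ≤ Fintype.card W := hn.length_le_card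
  obtain ⟨g, hg⟩ := exists_equiv_castLE rfl hcard (List.nodup_iff_injective_get.mp hn)
  refine ⟨RelIso.symm ⟨g, @fun i j => ?_⟩⟩
  rw [← SimpleGraph.mem_edgeSet, hH, f2PlusIsolated_adj_iff, ← show g _ = a from hg 0,
    ← show g _ = b from hg 1, ← show g _ = c from hg 2, ← show g _ = d from hg 3,
    ← show g _ = e from hg 4]
  simp only [Set.mem_insert_iff, Set.mem_singleton_iff, Sym2.eq_iff, g.injective.eq_iff,
    Fin.ext_iff, Fin.val_castLE]
  rfl

end Friendship

section Classification

variable {W : Type*} [Fintype W] {H : SimpleGraph W}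

theorem sum_sq_degree_le {B : ℕ} (hB : ∀ ⦃v w⦄, H.Adj v w → H.degree v + H.degree w ≤ B) :
    ∑ v, H.degree v ^ 2 ≤ H.edgeFinset.card * B := by
  have h_fst : ∑ v, ∑ _w ∈ H.neighborFinset v, H.degree v = ∑ v, H.degree v ^ 2 := by
    simp [sq]
  have h_snd : ∑ v, ∑ w ∈ H.neighborFinset v, H.degree w = ∑ v, H.degree v ^ 2 := by
    rw [← h_fst]
    exact Finset.sum_comm' fun v w => by simp [H.adj_comm]
  have h_sum : ∑ v, ∑ w ∈ H.neighborFinset v, (H.degree v + H.degree w) ≤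
      ∑ v, ∑ _w ∈ H.neighborFinset v, B := by
    gcongr with v _ w hw
    exact hB ((H.mem_neighborFinset v w).mp hw)
  simp only [Finset.sum_add_distrib, h_fst, h_snd] at h_sum
  simp only [Finset.sum_const, smul_eq_mul, SimpleGraph.card_neighborFinset_eq_degree,
    ← Finset.sum_mul, H.sum_degrees_eq_twice_card_edges] at h_sum
  linarith

theorem card_incidenceFinset_union_add_one {u v : W} (huv : H.Adj u v) :
    (H.incidenceFinset u ∪ H.incidenceFinset v).card + 1 = H.degree u + H.degree v := by
  have h_inter : H.incidenceFinset u ∩ H.incidenceFinset v = {s(u, v)} := by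
    ext e
    simpa using Set.ext_iff.mp (H.incidenceSet_inter_incidenceSet_of_adj huv) e
  rw [← H.card_incidenceFinset_eq_degree u, ← H.card_incidenceFinset_eq_degree v,
    ← Finset.card_union_add_card_inter, h_inter, Finset.card_singleton]

theorem degree_add_degree_le {u v : W} (huv : H.Adj u v) :
    H.degree u + H.degree v ≤ H.edgeFinset.card + 1 := by
  rw [← card_incidenceFinset_union_add_one huv]
  gcongr
  exact Finset.union_subset (H.incidenceFinset_subset u) (H.incidenceFinset_subset v)

theorem hasEDC_joinK1_of_five_le_degree {v : W} (hv : 5 ≤ H.degree v) : HasEDC (joinK1 H) 3 := by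
  rw [← H.card_neighborSet_eq_degree] at hv
  obtain ⟨f⟩ : Nonempty (Fin 5 ↪ H.neighborSet v) :=
    Function.Embedding.nonempty_of_card_le (by rwa [Fintype.card_fin])
  refine hasEDC_joinK1_of_star ?_ (f 0).2 (f 1).2 (f 2).2 (f 3).2 (f 4).2
  have ne (i : Fin 5) : v ≠ f i := SimpleGraph.Adj.ne (f i).2
  simp [ne, Subtype.coe_inj]

theorem hasEDC_joinK1_of_three_le_card_sdiff {v x y : W} (hxy : H.Adj x y) (hx : x ≠ v)
    (hy : y ≠ v) (h : 3 ≤ (H.neighborFinset v \ {x, y}).card) : HasEDC (joinK1 H) 3 := by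
  obtain ⟨a, ha, b, hb, c, hc, hab, hac, hbc⟩ := Finset.two_lt_card.mp h
  simp only [Finset.mem_sdiff, SimpleGraph.mem_neighborFinset, Finset.mem_insert,
    Finset.mem_singleton, not_or] at ha hb hc
  refine hasEDC_joinK1_of_claw_edge ?_ ha.1 hb.1 hc.1 hxy
  grind [ha.1.ne, hb.1.ne, hc.1.ne, hxy.ne]

theorem mem_neighborFinset_of_degree_eq_four (hH : ¬HasEDC (joinK1 H) 3) {v x y : W}
    (hv : H.degree v = 4) (hxy : H.Adj x y) (hx : x ≠ v) (hy : y ≠ v) : x ∈ H.neighborFinset v := by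
  by_contra hxv
  refine hH (hasEDC_joinK1_of_three_le_card_sdiff hxy hx hy ?_)
  have := Finset.le_card_sdiff {y} (H.neighborFinset v)
  rw [Finset.card_singleton, H.card_neighborFinset_eq_degree, hv] at this
  convert this using 2
  grind

theorem eq_of_adj_of_degree_eq_four (hH : ¬HasEDC (joinK1 H) 3) {v x y z : W}
    (hv : H.degree v = 4) (hxy : H.Adj x y) (hyz : H.Adj y z) (hx : x ≠ v) (hy : y ≠ v)
    (hz : z ≠ v) : x = z := by
  by_contra hxz
  have hxv := mem_neighborFinset_of_degree_eq_four hH hv hxy hx hy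
  have hyv := mem_neighborFinset_of_degree_eq_four hH hv hyz hy hz
  have hzv := mem_neighborFinset_of_degree_eq_four hH hv hyz.symm hz hy
  obtain ⟨w, hwv, hw⟩ := Finset.exists_mem_notMem_of_card_lt_card
    (s := {x, y, z}) (t := H.neighborFinset v) (by
      rw [H.card_neighborFinset_eq_degree, hv]
      exact Finset.card_le_three.trans_lt (by norm_num))
  simp only [SimpleGraph.mem_neighborFinset] at hxv hyv hzv hwv
  refine hH (hasEDC_joinK1_of_bull (a := v) (b := y) (c := x) (d := w) (e := z) ?_ hyv hxy.symm
    hxv.symm hwv hyz)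
  grind [hwv.ne, hxy.ne, hyz.ne]

theorem nonempty_iso_of_degree_eq_four (hH : ¬HasEDC (joinK1 H) 3) {v x y z w : W}
    (hv : H.degree v = 4) (hxy : H.Adj x y) (hzw : H.Adj z w) (hx : x ≠ v) (hy : y ≠ v)
    (hz : z ≠ v) (hw : w ≠ v) (hne : s(x, y) ≠ s(z, w)) :
    Nonempty (H ≃g f2PlusIsolated (Fintype.card W)) := by
  have eq_of_adj {a b c : W} (hab : H.Adj a b) (hbc : H.Adj b c) (ha : a ≠ v) (hb : b ≠ v)
      (hc : c ≠ v) : a = c := eq_of_adj_of_degree_eq_four hH hv hab hbc ha hb hc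
  have mem_neighborFinset {a b : W} (hab : H.Adj a b) (ha : a ≠ v) (hb : b ≠ v) :
      a ∈ H.neighborFinset v := mem_neighborFinset_of_degree_eq_four hH hv hab ha hb
  have hn : [v, x, y, z, w].Nodup := by
    grind [hxy.symm, hzw.symm, hxy.ne, hzw.ne]
  have neighborFinset_eq : {x, y, z, w} = H.neighborFinset v := by
    refine Finset.eq_of_subset_of_card_le ?_ ?_
    · simp only [Finset.insert_subset_iff, Finset.singleton_subset_iff]
      exact ⟨mem_neighborFinset hxy hx hy, mem_neighborFinset hxy.symm hy hx,
        mem_neighborFinset hzw hz hw, mem_neighborFinset hzw.symm hw hz⟩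
    · rw [H.card_neighborFinset_eq_degree, hv]
      simpa using (List.toFinset_card_of_nodup hn.of_cons).ge
  have adj_iff (p : W) : H.Adj v p ↔ p = x ∨ p = y ∨ p = z ∨ p = w := by
    simp [← H.mem_neighborFinset, ← neighborFinset_eq]
  refine nonempty_iso_f2PlusIsolated hn ?_
  ext e
  induction e with | _ p q
  simp only [SimpleGraph.mem_edgeSet, Set.mem_insert_iff, Set.mem_singleton_iff, Sym2.eq_iff]
  by_cases hp : p = v
  · rw [hp, adj_iff]
    grind
  by_cases hq : q = v
  · rw [hq, H.adj_comm, adj_iff]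
    grind
  constructor
  · intro hpq
    have := (adj_iff p).mp (by simpa using mem_neighborFinset hpq hp hq)
    grind [hxy.symm, hzw.symm]
  · grind [hxy.symm, hzw.symm]

theorem nonempty_iso_or_card_edgeFinset_le_of_degree_eq_four (hH : ¬HasEDC (joinK1 H) 3) {v : W}
    (hv : H.degree v = 4) :
    Nonempty (H ≃g f2PlusIsolated (Fintype.card W)) ∨ H.edgeFinset.card ≤ 5 := by
  by_cases hcard : (H.edgeFinset \ H.incidenceFinset v).card ≤ 1
  · right
    have := Finset.card_sdiff_add_card_eq_card (H.incidenceFinset_subset v)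
    rw [H.card_incidenceFinset_eq_degree] at this
    omega
  · left
    obtain ⟨e, he, e', he', hne⟩ := Finset.one_lt_card.mp (not_le.mp hcard)
    induction e with | _ x y
    induction e' with | _ z w
    simp only [Finset.mem_sdiff, SimpleGraph.mem_edgeFinset, SimpleGraph.mem_edgeSet,
      SimpleGraph.mem_incidenceFinset, SimpleGraph.mk'_mem_incidenceSet_iff, not_and, not_or]
      at he he'
    obtain ⟨hxv, hyv⟩ := he.2 he.1
    obtain ⟨hzv, hwv⟩ := he'.2 he'.1
    exact nonempty_iso_of_degree_eq_four hH hv he.1 he'.1 (Ne.symm hxv) (Ne.symm hyv)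
      (Ne.symm hzv) (Ne.symm hwv) hne

theorem exists_adj_iff_of_degree_eq_three {x y : W} (hxy : H.Adj x y) (hx : H.degree x = 3) :
    ∃ p q, p ≠ q ∧ p ≠ y ∧ q ≠ y ∧ ∀ w, H.Adj x w ↔ w = y ∨ w = p ∨ w = q := by
  have hy : y ∈ H.neighborFinset x := (H.mem_neighborFinset x y).mpr hxy
  obtain ⟨p, q, hpq, h_erase⟩ : ∃ p q, p ≠ q ∧ (H.neighborFinset x).erase y = {p, q} := by
    rw [← Finset.card_eq_two, Finset.card_erase_of_mem hy, H.card_neighborFinset_eq_degree, hx]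
  have mem_iff (w : W) : w ≠ y ∧ H.Adj x w ↔ w = p ∨ w = q := by
    simpa using Finset.ext_iff.mp h_erase w
  exact ⟨p, q, hpq, by grind, by grind, by grind⟩

theorem exists_common_neighbors_of_degree_eq_three (hH : ¬HasEDC (joinK1 H) 3) {x y : W}
    (hxy : H.Adj x y) (hx : H.degree x = 3) (hy : H.degree y = 3) :
    ∃ p q, p ≠ q ∧ (∀ w, H.Adj x w ↔ w = y ∨ w = p ∨ w = q) ∧
      ∀ w, H.Adj y w ↔ w = x ∨ w = p ∨ w = q := by
  have common_of_common {p q r : W} (hxp : H.Adj x p) (hyp : H.Adj y p) (hxq : H.Adj x q)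
      (hyr : H.Adj y r) (hqy : q ≠ y) (hqp : q ≠ p) (hrx : r ≠ x) (hrp : r ≠ p) : q = r := by
    by_contra hqr
    refine hH (hasEDC_joinK1_of_bull ?_ hxy hyp hxp.symm hxq hyr)
    grind [hxy.ne, hxp.ne, hyp.ne, hxq.ne, hyr.ne]
  obtain ⟨p, q, hpq, hpy, hqy, hNx⟩ := exists_adj_iff_of_degree_eq_three hxy hx
  obtain ⟨r, s, hrs, hrx, hsx, hNy⟩ := exists_adj_iff_of_degree_eq_three hxy.symm hy
  have hxp := (hNx p).mpr (by simp)
  have hxq := (hNx q).mpr (by simp)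
  have hyr := (hNy r).mpr (by simp)
  have hys := (hNy s).mpr (by simp)
  have h_common : p = r ∨ p = s ∨ q = r ∨ q = s := by
    by_contra! hne
    refine hH (hasEDC_joinK1_of_double_star ?_ hxy hxp hxq hyr hys)
    grind [hxy.ne, hxp.ne, hxq.ne, hyr.ne, hys.ne]
  refine ⟨p, q, hpq, hNx, ?_⟩
  grind

theorem card_edgeFinset_le_of_adj_of_degree_eq_three (hH : ¬HasEDC (joinK1 H) 3) {x y : W}
    (hxy : H.Adj x y) (hx : H.degree x = 3) (hy : H.degree y = 3) : H.edgeFinset.card ≤ 5 := by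
  obtain ⟨p, q, hpq, hNx, hNy⟩ := exists_common_neighbors_of_degree_eq_three hH hxy hx hy
  have hxp := (hNx p).mpr (by simp)
  have hxq := (hNx q).mpr (by simp)
  have hyp := (hNy p).mpr (by simp)
  have hyq := (hNy q).mpr (by simp)
  have hpq' : ¬H.Adj p q := fun h => by
    refine hH (hasEDC_joinK1_of_clique ?_ hxy hyp hxp.symm hxq hyq h)
    grind [hxy.ne, hxp.ne, hxq.ne, hyp.ne, hyq.ne]
  have not_adj {a b t : W} (hxa : H.Adj x a) (hya : H.Adj y a) (hxb : H.Adj x b) (hab : a ≠ b)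
      (hby : b ≠ y) (htx : t ≠ x) (hty : t ≠ y) (htb : t ≠ b) : ¬H.Adj a t := fun hat => by
    refine hH (hasEDC_joinK1_of_bull ?_ hxa.symm hxy hya hat hxb)
    grind [hxa.ne, hya.ne, hxb.ne, hat.ne, hxy.ne]
  have subset : H.edgeFinset ⊆ {s(x, y), s(x, p), s(x, q), s(y, p), s(y, q)} := by
    intro e he
    induction e with | _ a b
    have hab : H.Adj a b := by simpa using he
    simp only [Finset.mem_insert, Finset.mem_singleton, Sym2.eq_iff]
    by_contra hne
    refine hH (hasEDC_joinK1_of_claw_edge (a := x) (b := y) (c := p) (d := q) ?_ hxy hxp hxq hab)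
    grind [hxy.ne, hxp.ne, hxq.ne, hyp.ne, hyq.ne, hab.ne, H.adj_comm]
  exact (Finset.card_le_card subset).trans Finset.card_le_five

theorem card_edgeFinset_le_of_degree_eq_three (hH : ¬HasEDC (joinK1 H) 3) {v : W}
    (hv : H.degree v = 3) (hN : ∀ w, H.Adj v w → H.degree w ≤ 2) : H.edgeFinset.card ≤ 6 := by
  have subset_biUnion :
      H.edgeFinset ⊆ (H.neighborFinset v).biUnion fun w => H.incidenceFinset w := by
    intro e he
    induction e with | _ x y
    have hxy : H.Adj x y := by simpa using he
    simp only [Finset.mem_biUnion, SimpleGraph.mem_neighborFinset, SimpleGraph.mem_incidenceFinset,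
      SimpleGraph.mk'_mem_incidenceSet_iff]
    by_cases hxv : x = v
    · exact ⟨y, hxv ▸ hxy, hxy, .inr rfl⟩
    by_cases hyv : y = v
    · exact ⟨x, hyv ▸ hxy.symm, hxy, .inl rfl⟩
    by_contra! hne
    refine hH (hasEDC_joinK1_of_three_le_card_sdiff hxy hxv hyv ?_)
    rw [Finset.sdiff_eq_self_of_disjoint, H.card_neighborFinset_eq_degree, hv]
    simp
    grind
  calc H.edgeFinset.card ≤ ∑ w ∈ H.neighborFinset v, (H.incidenceFinset w).card :=
        (Finset.card_le_card subset_biUnion).trans Finset.card_biUnion_le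
    _ ≤ (H.neighborFinset v).card • 2 := Finset.sum_le_card_nsmul _ _ _ fun w hw => by
        rw [H.card_incidenceFinset_eq_degree]
        exact hN w ((H.mem_neighborFinset v w).mp hw)
    _ = 6 := by rw [H.card_neighborFinset_eq_degree, hv, smul_eq_mul]

theorem card_edgeFinset_le_of_degree_le_two (hH : ¬HasEDC (joinK1 H) 3)
    (h : ∀ v, H.degree v ≤ 2) : H.edgeFinset.card ≤ 6 := by
  have card_le {a b : W} (hab : H.Adj a b) :
      (H.incidenceFinset a ∪ H.incidenceFinset b).card ≤ 3 := by
    have := card_incidenceFinset_union_add_one hab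
    have := h a
    have := h b
    omega
  obtain h_empty | ⟨e, he⟩ := H.edgeFinset.eq_empty_or_nonempty
  · simp [h_empty]
  induction e with | _ a b
  have hab : H.Adj a b := by simpa using he
  by_cases h_cover : H.edgeFinset ⊆ H.incidenceFinset a ∪ H.incidenceFinset b
  · exact (Finset.card_le_card h_cover).trans ((card_le hab).trans (by norm_num))
  obtain ⟨e', he', hne⟩ := Finset.not_subset.mp h_cover
  induction e' with | _ c d
  have hcd : H.Adj c d := by simpa using he'
  have h_cover' : H.edgeFinset ⊆ (H.incidenceFinset a ∪ H.incidenceFinset b) ∪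
      (H.incidenceFinset c ∪ H.incidenceFinset d) := by
    intro f hf
    induction f with | _ p q
    have hpq : H.Adj p q := by simpa using hf
    by_contra hne'
    simp only [Finset.mem_union, SimpleGraph.mem_incidenceFinset,
      SimpleGraph.mk'_mem_incidenceSet_iff, hcd, hpq, true_and] at hne hne'
    refine hH (hasEDC_joinK1_of_matching ?_ hab hcd hpq)
    grind [hab.ne, hcd.ne, hpq.ne]
  calc H.edgeFinset.card ≤ _ := (Finset.card_le_card h_cover').trans (Finset.card_union_le _ _)
    _ ≤ 3 + 3 := add_le_add (card_le hab) (card_le hcd)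

theorem nonempty_iso_or_sum_sq_degree_le (hH : ¬HasEDC (joinK1 H) 3) :
    Nonempty (H ≃g f2PlusIsolated (Fintype.card W)) ∨
      H.edgeFinset.card ≤ 6 ∧ ∑ v, H.degree v ^ 2 ≤ 30 := by
  have of_card_le_five (h : H.edgeFinset.card ≤ 5) :
      H.edgeFinset.card ≤ 6 ∧ ∑ v, H.degree v ^ 2 ≤ 30 :=
    ⟨h.trans (by norm_num), (sum_sq_degree_le fun v w hvw =>
      (degree_add_degree_le hvw).trans (Nat.add_le_add_right h 1)).trans
        (Nat.mul_le_mul_right 6 h)⟩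
  by_cases h_four : ∃ v, H.degree v = 4
  · obtain ⟨v, hv⟩ := h_four
    exact (nonempty_iso_or_card_edgeFinset_le_of_degree_eq_four hH hv).imp_right of_card_le_five
  right
  by_cases h_three : ∃ x y, H.Adj x y ∧ H.degree x = 3 ∧ H.degree y = 3
  · obtain ⟨x, y, hxy, hx, hy⟩ := h_three
    exact of_card_le_five (card_edgeFinset_le_of_adj_of_degree_eq_three hH hxy hx hy)
  have degree_le (v : W) : H.degree v ≤ 3 := by
    have := mt hasEDC_joinK1_of_five_le_degree (b := HasEDC (joinK1 H) 3) hH (a := 5 ≤ H.degree v)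
    grind
  have card_le : H.edgeFinset.card ≤ 6 := by
    by_cases h : ∃ v, H.degree v = 3
    · obtain ⟨v, hv⟩ := h
      exact card_edgeFinset_le_of_degree_eq_three hH hv (by grind)
    · exact card_edgeFinset_le_of_degree_le_two hH (by grind)
  exact ⟨card_le, (sum_sq_degree_le (B := 5) (by grind)).trans (Nat.mul_le_mul_right 5 card_le)⟩

end Classification

section Extremal

theorem sqrt_lt_specRad_joinK1_f2PlusIsolated {m : ℕ} (hm : 5 ≤ m) :
    √m < specRad (joinK1 (f2PlusIsolated m)) := by
  refine lt_specRad_joinK1_f2PlusIsolated hm (by positivity) ?_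
  rw [Real.sq_sqrt m.cast_nonneg, sub_self, mul_zero]
  positivity

theorem IsPerronVector.specRad_joinK1_lt {W : Type*} [Fintype W] {H : SimpleGraph W}
    {x : Option W → ℝ} (hx : IsPerronVector (joinK1 H) x none) (hW : 5 ≤ Fintype.card W)
    (hρ : 96 < specRad (joinK1 H)) (h_edge : H.edgeFinset.card ≤ 6)
    (h_sq : ∑ v, H.degree v ^ 2 ≤ 30) :
    specRad (joinK1 H) < specRad (joinK1 (f2PlusIsolated (Fintype.card W))) := by
  refine lt_specRad_joinK1_f2PlusIsolated hW (by linarith) ?_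
  have h_sum : ∑ v, (H.degree v : ℝ) ≤ 12 := by
    have := H.sum_degrees_eq_twice_card_edges
    exact_mod_cast show ∑ v, H.degree v ≤ 12 by omega
  have le := hx.specRad_joinK1_mul_le (Δ := 6)
    (fun v => (H.degree_le_card_edgeFinset v).trans h_edge) (by push_cast; linarith)
  generalize specRad (joinK1 H) = ρ at hρ le ⊢
  calc ρ ^ 2 * (ρ ^ 2 - Fintype.card W) = ρ * (ρ * (ρ ^ 2 - Fintype.card W)) := by ring
    _ ≤ ρ * (12 + 30 / (ρ - 6)) := by
        gcongr
        refine le.trans (add_le_add h_sum ?_)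
        push_cast
        gcongr
        · linarith
        · exact_mod_cast h_sq
    _ = ρ * 12 + 30 * ρ / (ρ - 6) := by ring
    _ < ρ * 12 + 32 := by
        gcongr
        rw [div_lt_iff₀ (by linarith)]
        linarith

variable {V : Type*} [Fintype V] {G : SimpleGraph V} {n : ℕ}

theorem le_specRad_of_specRad_joinK1_f2PlusIsolated_le (hn : 27226 ≤ n)
    (hG : specRad (joinK1 (f2PlusIsolated (n - 1))) ≤ specRad G) :
    165 ≤ specRad G ∧ n ≤ specRad G ^ 2 + 1 := by
  have sqrt_le := (sqrt_lt_specRad_joinK1_f2PlusIsolated (m := n - 1) (by omega)).le.trans hG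
  have h_sq := Real.sqrt_le_iff.mp sqrt_le
  have cast_le : (n : ℝ) ≤ (n - 1 : ℕ) + 1 := by exact_mod_cast show n ≤ n - 1 + 1 by omega
  refine ⟨le_trans (Real.le_sqrt_of_sq_le ?_) sqrt_le, by linarith⟩
  exact_mod_cast show 165 ^ 2 ≤ n - 1 by omega

theorem nonempty_iso_joinK1_f2PlusIsolated_of_isMax (hn : 27226 ≤ n) (hV : Fintype.card V = n)
    (hG : ¬HasEDC G 3) (hmax : ∀ G' : SimpleGraph V, ¬HasEDC G' 3 → specRad G' ≤ specRad G)
    (hle : specRad (joinK1 (f2PlusIsolated (n - 1))) ≤ specRad G) :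
    Nonempty (G ≃g joinK1 (f2PlusIsolated (n - 1))) := by
  have : Nonempty V := Fintype.card_pos_iff.mp (by omega)
  obtain ⟨x, u, hx⟩ := exists_isPerronVector G
  obtain ⟨hρ, hn'⟩ := le_specRad_of_specRad_joinK1_f2PlusIsolated_le hn hle
  have adj_apex (v : V) (huv : u ≠ v) : G.Adj u v :=
    hx.adj_of_isSparse (isSparse_of_not_hasEDC (d := 6) (k := 2) (by norm_num) hG) hρ
      (by rwa [hV]) (fun v huv => hx.one_lt_specRad_mul hG hmax huv) huv
  obtain ⟨e, he⟩ := exists_iso_joinK1 adj_apex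
  generalize G.induce {v | v ≠ u} = H at e he
  have card_eq : n - 1 = Fintype.card {v | v ≠ u} := by rw [Set.card_ne_eq, hV]
  rw [card_eq] at hle ⊢
  have hH : ¬HasEDC (joinK1 H) 3 := fun h => hG (h.map e.symm.toEmbedding)
  obtain ⟨⟨i⟩⟩ | ⟨h_edge, h_sq⟩ := nonempty_iso_or_sum_sq_degree_le hH
  · obtain ⟨j⟩ := nonempty_joinK1_iso i
    exact ⟨e.trans j⟩
  · have hy := hx.comp_symm e
    rw [he] at hy
    rw [specRad_congr e] at hle hρ
    exact absurd hle (hy.specRad_joinK1_lt (by omega) (by linarith) h_edge h_sq).not_ge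

theorem nonempty_iso_joinK1_f2PlusIsolated_of_specRad_le (hn : 27226 ≤ n)
    (hV : Fintype.card V = n) (hG : ¬HasEDC G 3)
    (hle : specRad (joinK1 (f2PlusIsolated (n - 1))) ≤ specRad G) :
    Nonempty (G ≃g joinK1 (f2PlusIsolated (n - 1))) := by
  obtain ⟨M, hM, hmax⟩ := Set.exists_max_image {G' : SimpleGraph V | ¬HasEDC G' 3} specRad
    (Set.toFinite _) ⟨G, hG⟩
  obtain ⟨e⟩ :=
    nonempty_iso_joinK1_f2PlusIsolated_of_isMax hn hV hM hmax (hle.trans (hmax G hG))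
  exact nonempty_iso_joinK1_f2PlusIsolated_of_isMax hn hV hG
    (fun G' hG' => (hmax G' hG').trans ((specRad_congr e).trans_le hle)) hle

end Extremal

theorem spectral_extremal_k3_general (n : ℕ) (hn : 27226 ≤ n) {V : Type*} [Fintype V]
    (hV : Fintype.card V = n) (G : SimpleGraph V) (hG : phi G ≤ 2) :
    specRad G ≤ specRad (joinK1 (f2PlusIsolated (n - 1))) ∧
    (specRad G = specRad (joinK1 (f2PlusIsolated (n - 1))) ↔
      Nonempty (G ≃g joinK1 (f2PlusIsolated (n - 1)))) := by
  have iso_of_le := nonempty_iso_joinK1_f2PlusIsolated_of_specRad_le hn hV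
    (not_hasEDC_of_phi_lt (Nat.lt_succ_of_le hG))
  refine ⟨?_, fun h => iso_of_le h.ge, fun ⟨e⟩ => specRad_congr e⟩
  by_contra! hlt
  obtain ⟨e⟩ := iso_of_le hlt.le
  exact hlt.ne' (specRad_congr e)

/-- For `n ≥ 46656`, `K₁ ∇ (F₂ ∪ (n-6)K₁)` is the unique graph (up to isomorphism)
maximizing the spectral radius among all `n`-vertex graphs without `3` pairwise
edge-disjoint cycles. -/
theorem spectral_extremal_k3 (n : ℕ) (hn : 46656 ≤ n) {V : Type*} [Fintype V]
    (hV : Fintype.card V = n) (G : SimpleGraph V) (hG : phi G ≤ 2) :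
    specRad G ≤ specRad (joinK1 (f2PlusIsolated (n - 1))) ∧
    (specRad G = specRad (joinK1 (f2PlusIsolated (n - 1))) ↔
      Nonempty (G ≃g joinK1 (f2PlusIsolated (n - 1)))) :=
  spectral_extremal_k3_general n (by omega) hV G hG

end PaperEDC
end

section
/- Let G be a simple graph on n vertices with a dominating vertex u* such that G contains no 3 pairwise edge-disjoint cycles (φ(G) ≤ 2). Then e(G − u*) ≤ 6, and hence e(G) ≤ n+5. -/
open scoped Classical

namespace PaperEDC

/-!
Let `H` be the subgraph of `G` induced on the neighbors of `u`. A path of length one or two in `H`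
closes up to a cycle through `u`; deleting its two ends from `G` destroys the whole cycle, so any
cycles that survive are edge-disjoint from it. Hence a vertex of degree at least `2k - 1` in `H`
yields `k` edge-disjoint cycles, and so does a matching with `k` edges.

Suppose `H` has seven edges. Removing the edges of a triangle of `H` leaves four edges, which yield
two further cycles; removing those of a 4-cycle leaves three edges, which also suffice if `H` has no
triangle. If `H` has neither, and no vertex of degree five, then some vertex `a` has three neighbors
`p`, `q`, `r`, and `p`, `q` have neighbors `x`, `y` other than `a`, for otherwise deleting the two
ends of an edge would leave three edges. The edges `px`, `qy`, `ar` then form a matching.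
-/

open SimpleGraph

section EdgeDisjointCycles

variable {V : Type*} {G K : SimpleGraph V} {a b c d v : V} {m : ℕ}

lemma hasEDC_zero (G : SimpleGraph V) : HasEDC G 0 :=
  ⟨Fin.elim0, fun i => i.elim0, fun i => i.elim0⟩

lemma HasEDC.succ_of_isCycle (h : HasEDC K m) (hK : K ≤ G) {w : G.Walk v v} (hw : w.IsCycle)
    (hwK : ∀ e ∈ w.edges, e ∉ K.edgeSet) : HasEDC G (m + 1) := by
  obtain ⟨c, hc, hd⟩ := h
  have hedges (i : Fin m) (e : Sym2 V) : e ∈ ((c i).2.mapLe hK).edges ↔ e ∈ (c i).2.edges := by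
    rw [Walk.edges_mapLe_eq_edges]
  have hw_notMem (i : Fin m) : ∀ e ∈ w.edges, e ∉ ((c i).2.mapLe hK).edges :=
    fun e he hei => hwK e he ((c i).2.edges_subset_edgeSet ((hedges i e).1 hei))
  refine ⟨Fin.cons ⟨v, w⟩ fun i => ⟨(c i).1, (c i).2.mapLe hK⟩, ?_, ?_⟩
  · exact Fin.cases hw fun i => (hc i).mapLe hK
  · intro i j hij e hi hj
    cases i using Fin.cases <;> cases j using Fin.cases
    · exact hij rfl
    · exact hw_notMem _ e hi hj
    · exact hw_notMem _ e hj hi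
    · exact hd _ _ (fun h => hij (congrArg _ h)) e ((hedges _ e).1 hi) ((hedges _ e).1 hj)

lemma HasEDC.succ_of_triangle (h : HasEDC K m) (hK : K ≤ G)
    (hab : G.Adj a b) (hbc : G.Adj b c) (hca : G.Adj c a)
    (hab' : ¬K.Adj a b) (hbc' : ¬K.Adj b c) (hca' : ¬K.Adj c a) : HasEDC G (m + 1) := by
  refine h.succ_of_isCycle (w := .cons hab (.cons hbc (.cons hca .nil))) hK ?_
    (by simp [hab', hbc', hca'])
  have := hab.ne
  have := hbc.ne
  have := hca.ne
  rw [Walk.cons_isCycle_iff]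
  simp only [Walk.cons_isPath_iff, Walk.isPath_iff_nil, Walk.nil_nil, Walk.support_cons,
    Walk.support_nil, Walk.edges_cons, Walk.edges_nil, List.mem_cons, List.not_mem_nil, Sym2.eq,
    Sym2.rel_iff', Prod.mk.injEq, Prod.swap_prod_mk]
  grind

lemma HasEDC.succ_of_square (h : HasEDC K m) (hK : K ≤ G)
    (hab : G.Adj a b) (hbc : G.Adj b c) (hcd : G.Adj c d) (hda : G.Adj d a)
    (hac : a ≠ c) (hbd : b ≠ d) (hab' : ¬K.Adj a b) (hbc' : ¬K.Adj b c) (hcd' : ¬K.Adj c d)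
    (hda' : ¬K.Adj d a) : HasEDC G (m + 1) := by
  refine h.succ_of_isCycle (w := .cons hab (.cons hbc (.cons hcd (.cons hda .nil)))) hK ?_
    (by simp [hab', hbc', hcd', hda'])
  have := hab.ne
  have := hbc.ne
  have := hcd.ne
  have := hda.ne
  rw [Walk.cons_isCycle_iff]
  simp only [Walk.cons_isPath_iff, Walk.isPath_iff_nil, Walk.nil_nil, Walk.support_cons,
    Walk.support_nil, Walk.edges_cons, Walk.edges_nil, List.mem_cons, List.not_mem_nil, Sym2.eq,
    Sym2.rel_iff', Prod.mk.injEq, Prod.swap_prod_mk]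
  grind

lemma HasEDC.le_ecard [Finite G.edgeSet] (h : HasEDC G m) : m ≤ ecard G := by
  obtain ⟨c, hc, hd⟩ := h
  have hne (i : Fin m) : ∃ e, e ∈ (c i).2.edges :=
    List.exists_mem_of_ne_nil _ fun h0 => (hc i).not_nil (Walk.edges_eq_nil.1 h0)
  choose f hf using hne
  let g (i : Fin m) : G.edgeSet := ⟨f i, (c i).2.edges_subset_edgeSet (hf i)⟩
  have hinj : Function.Injective g := by
    intro i j hij
    have hfij : f i = f j := congrArg Subtype.val hij
    by_contra hne
    exact hd i j hne _ (hf i) (hfij ▸ hf j)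
  simpa [ecard] using Nat.card_le_card_of_injective _ hinj

lemma HasEDC.le_phi [Finite G.edgeSet] (h : HasEDC G m) : m ≤ phi G :=
  le_csSup ⟨ecard G, fun _ => HasEDC.le_ecard⟩ h

end EdgeDisjointCycles

lemma encard_incidenceSet {V : Type*} (G : SimpleGraph V) (a : V) :
    (G.incidenceSet a).encard = (G.neighborSet a).encard :=
  Set.encard_congr (G.incidenceSetEquivNeighborSet a)

/-- The link of `u` in `G`: the subgraph of `G` induced on the neighbors of `u`. All vertices of `V`
are kept, those not adjacent to `u` being isolated, so that links after deletions are comparable. -/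
def link {V : Type*} (G : SimpleGraph V) (u : V) : SimpleGraph V where
  Adj x y := G.Adj x y ∧ G.Adj u x ∧ G.Adj u y
  symm := ⟨fun _ _ h => ⟨h.1.symm, h.2.2, h.2.1⟩⟩
  loopless := ⟨fun _ h => h.1.ne rfl⟩

section Link

variable {V : Type*} {G K : SimpleGraph V} {u a b c d x y : V} {k m : ℕ}

lemma link_mono (h : K ≤ G) : link K u ≤ link G u :=
  fun _ _ hxy => ⟨h hxy.1, h hxy.2.1, h hxy.2.2⟩

lemma encard_edgeSet_induce_le_link {s : Set V} (hs : ∀ v ∈ s, G.Adj u v) :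
    (G.induce s).edgeSet.encard ≤ (link G u).edgeSet.encard := by
  let f : G.induce s →g link G u := ⟨Subtype.val, fun {x y} h => ⟨h, hs x x.2, hs y y.2⟩⟩
  exact Function.Embedding.encard_le
    ⟨f.mapEdgeSet, Hom.mapEdgeSet.injective f Subtype.val_injective⟩

lemma le_encard_edgeSet_link_deleteEdges {S : Set (Sym2 V)} (hS : ∀ e ∈ S, u ∉ e)
    (hk : S.encard ≤ k) (hm : m + k ≤ (link G u).edgeSet.encard) :
    m ≤ (link (G.deleteEdges S) u).edgeSet.encard := by
  have hsub : (link G u).edgeSet \ S ⊆ (link (G.deleteEdges S) u).edgeSet := by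
    rintro ⟨x, y⟩ ⟨hxy, hxyS⟩
    have hu (z : V) : s(u, z) ∉ S := fun h => hS _ h (Sym2.mem_mk_left u z)
    simp_all [link]
  refine (ENat.add_le_add_iff_right (ENat.natCast_ne_top k)).1 ?_
  grw [hm, Set.encard_le_encard_sdiff_add_encard _ S, hsub, hk]

lemma deleteIncidenceSet_deleteIncidenceSet_le :
    (G.deleteIncidenceSet a).deleteIncidenceSet b ≤ G :=
  (deleteIncidenceSet_le _ _).trans (deleteIncidenceSet_le _ _)

lemma link_deleteIncidenceSet_adj :
    (link ((G.deleteIncidenceSet a).deleteIncidenceSet b) u).Adj x y ↔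
      (link G u).Adj x y ∧ u ≠ a ∧ u ≠ b ∧ x ≠ a ∧ x ≠ b ∧ y ≠ a ∧ y ≠ b := by
  simp only [link, deleteIncidenceSet_adj]
  tauto

lemma encard_edgeSet_link_le_deleteIncidenceSet (hab : (link G u).Adj a b) :
    (link G u).edgeSet.encard ≤
      (link ((G.deleteIncidenceSet a).deleteIncidenceSet b) u).edgeSet.encard +
        ((link G u).incidenceSet a ∪ (link G u).incidenceSet b).encard := by
  grw [← Set.encard_union_le]
  refine Set.encard_le_encard ?_
  rintro ⟨x, y⟩ hxy
  have hua := hab.2.1.ne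
  have hub := hab.2.2.ne
  simp only [mem_edgeSet, Set.mem_union, incidenceSet, Set.mem_ofPred, Sym2.mem_iff,
    link_deleteIncidenceSet_adj] at hxy ⊢
  grind

lemma HasEDC.succ_of_link_adj
    (h : HasEDC ((G.deleteIncidenceSet a).deleteIncidenceSet b) m)
    (hab : (link G u).Adj a b) : HasEDC G (m + 1) :=
  h.succ_of_triangle deleteIncidenceSet_deleteIncidenceSet_le
    hab.2.1 hab.1 hab.2.2.symm
    (by simp [deleteIncidenceSet_adj]) (by simp [deleteIncidenceSet_adj])
    (by simp [deleteIncidenceSet_adj])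

lemma HasEDC.succ_of_link_path
    (h : HasEDC ((G.deleteIncidenceSet a).deleteIncidenceSet b) m)
    (hca : (link G u).Adj c a) (hcb : (link G u).Adj c b) (hab : a ≠ b) : HasEDC G (m + 1) :=
  h.succ_of_square deleteIncidenceSet_deleteIncidenceSet_le
    hca.2.2 hca.1.symm hcb.1 hcb.2.2.symm hca.2.1.ne hab
    (by simp [deleteIncidenceSet_adj]) (by simp [deleteIncidenceSet_adj])
    (by simp [deleteIncidenceSet_adj]) (by simp [deleteIncidenceSet_adj])

lemma hasEDC_one_of_link_adj (hab : (link G u).Adj a b) : HasEDC G 1 :=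
  (hasEDC_zero _).succ_of_link_adj hab

lemma hasEDC_one_of_one_le (h : 1 ≤ (link G u).edgeSet.encard) : HasEDC G 1 := by
  obtain ⟨⟨a, b⟩, hab⟩ := Set.one_le_encard_iff_nonempty.1 h
  exact hasEDC_one_of_link_adj hab

lemma hasEDC_two_of_matching (hab : (link G u).Adj a b) (hcd : (link G u).Adj c d)
    (hn : [a, b, c, d].Nodup) : HasEDC G 2 := by
  refine (hasEDC_one_of_link_adj (u := u) (a := c) (b := d) ?_).succ_of_link_adj hab
  have := hab.2.1.ne
  have := hab.2.2.ne
  rw [link_deleteIncidenceSet_adj]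
  grind

lemma hasEDC_three_of_matching (hab : (link G u).Adj a b) (hcd : (link G u).Adj c d)
    (hxy : (link G u).Adj x y) (hn : [a, b, c, d, x, y].Nodup) : HasEDC G 3 := by
  have := hab.2.1.ne
  have := hab.2.2.ne
  refine (hasEDC_two_of_matching (u := u) (a := c) (b := d) (c := x) (d := y) ?_ ?_
    ?_).succ_of_link_adj hab
  · rw [link_deleteIncidenceSet_adj]
    grind
  · rw [link_deleteIncidenceSet_adj]
    grind
  · grind

lemma hasEDC_of_two_mul_lt_encard_neighborSet
    (h : 2 * (k : ℕ∞) < ((link G u).neighborSet a).encard) : HasEDC G (k + 1) := by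
  induction k generalizing G with
  | zero =>
    obtain ⟨b, hab⟩ := Set.encard_pos.1 ((zero_le).trans_lt h)
    exact hasEDC_one_of_link_adj hab
  | succ k ih =>
    set N := (link G u).neighborSet a with hN
    obtain ⟨p, hp, q, hq, hpq⟩ := (Set.one_lt_encard_iff_nontrivial (s := N)).1
      (lt_of_le_of_lt (by norm_cast; lia) h)
    let K := (G.deleteIncidenceSet p).deleteIncidenceSet q
    suffices 2 * (k : ℕ∞) < ((link K u).neighborSet a).encard from
      (ih this).succ_of_link_path hp hq hpq
    have hle : N.encard ≤ ((link K u).neighborSet a).encard + ({p, q} : Set V).encard := by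
      grw [← Set.encard_union_le]
      refine Set.encard_le_encard fun x hx => ?_
      have := hp.1.ne
      have := hq.1.ne
      have := hp.2.2.ne
      have := hq.2.2.ne
      simp only [Set.mem_union, mem_neighborSet, K, link_deleteIncidenceSet_adj]
      simp only [hN, mem_neighborSet, Set.mem_insert_iff, Set.mem_singleton_iff] at hx ⊢
      grind
    rw [Set.encard_pair hpq] at hle
    refine lt_of_add_lt_add_right (a := 2) (lt_of_lt_of_le ?_ hle)
    simpa only [Nat.cast_succ, mul_add, mul_one] using h

lemma encard_incidenceSet_link_le (h : ¬HasEDC G (k + 1)) :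
    ((link G u).incidenceSet a).encard ≤ 2 * (k : ℕ∞) := by
  rw [encard_incidenceSet]
  exact not_lt.1 fun hlt => h (hasEDC_of_two_mul_lt_encard_neighborSet hlt)

lemma exists_link_adj_ne
    (hk : (m : ℕ∞) ≤ (link ((G.deleteIncidenceSet a).deleteIncidenceSet b) u).edgeSet.encard →
      HasEDC ((G.deleteIncidenceSet a).deleteIncidenceSet b) k)
    (he : m + 2 * k ≤ (link G u).edgeSet.encard) (hG : ¬HasEDC G (k + 1))
    (hab : (link G u).Adj a b) : ∃ c ≠ b, (link G u).Adj a c := by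
  -- If `a` were a leaf at `b`, deleting `a` and `b` would destroy only the edges at `b`.
  by_contra! hpend
  have hinc : (link G u).incidenceSet a ⊆ (link G u).incidenceSet b := by
    rintro ⟨x, y⟩ ⟨hxy, hax⟩
    refine ⟨hxy, ?_⟩
    rcases Sym2.mem_iff.1 hax with rfl | rfl
    · rw [by_contra fun hne => hpend y hne hxy]
      exact Sym2.mem_mk_right _ _
    · rw [by_contra fun hne => hpend x hne hxy.symm]
      exact Sym2.mem_mk_left _ _
  refine hG ((hk ?_).succ_of_link_adj hab)
  have hdel := encard_edgeSet_link_le_deleteIncidenceSet hab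
  rw [Set.union_eq_self_of_subset_left hinc] at hdel
  have hb := encard_incidenceSet_link_le (u := u) (a := b) hG
  refine (ENat.add_le_add_iff_right (ENat.natCast_ne_top (2 * k))).1 ?_
  push_cast
  grw [he, hdel, hb]

lemma hasEDC_two_of_cliqueFree (h3 : (link G u).CliqueFree 3)
    (he : 3 ≤ (link G u).edgeSet.encard) : HasEDC G 2 := by
  by_contra hG
  obtain ⟨⟨a, b⟩, hab : (link G u).Adj a b⟩ :=
    Set.encard_pos.1 (lt_of_lt_of_le (by norm_num) he)
  have hext {x y : V} : (link G u).Adj x y → ∃ z ≠ y, (link G u).Adj x z :=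
    exists_link_adj_ne (m := 1) hasEDC_one_of_one_le (by norm_num [he]) hG
  obtain ⟨c, hcb, hac⟩ := hext hab
  obtain ⟨d, hda, hbd⟩ := hext hab.symm
  have hcd : c ≠ d := by
    rintro rfl
    exact h3 {a, b, c} (is3Clique_triple_iff.2 ⟨hab, hac, hbd⟩)
  have := hab.ne
  have := hac.ne
  have := hbd.ne
  exact hG (hasEDC_two_of_matching hac hbd (by grind))

lemma hasEDC_succ_of_not_cliqueFree_link
    (hk : ∀ K ≤ G, (m : ℕ∞) ≤ (link K u).edgeSet.encard → HasEDC K k)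
    (he : m + 3 ≤ (link G u).edgeSet.encard) (h3 : ¬(link G u).CliqueFree 3) :
    HasEDC G (k + 1) := by
  obtain ⟨s, hs⟩ := not_forall_not.1 h3
  obtain ⟨a, b, c, hab, hac, hbc, rfl⟩ := is3Clique_iff.1 hs
  let S : Set (Sym2 V) := {s(a, b), s(b, c), s(c, a)}
  have huS : ∀ e ∈ S, u ∉ e := by simp [S, hab.2.1.ne, hab.2.2.ne, hac.2.2.ne]
  have hS : S.encard ≤ (3 : ℕ) := by
    grw [Set.encard_insert_le, Set.encard_insert_le, Set.encard_singleton]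
    norm_num
  exact (hk (G.deleteEdges S) (deleteEdges_le S)
    (le_encard_edgeSet_link_deleteEdges huS hS he)).succ_of_triangle (deleteEdges_le S)
      hab.1 hbc.1 hac.1.symm (by simp [S]) (by simp [S]) (by simp [S])

lemma hasEDC_succ_of_link_square
    (hk : ∀ K ≤ G, (m : ℕ∞) ≤ (link K u).edgeSet.encard → HasEDC K k)
    (he : m + 4 ≤ (link G u).edgeSet.encard) (hab : (link G u).Adj a b) (hbc : (link G u).Adj b c)
    (hcd : (link G u).Adj c d) (hda : (link G u).Adj d a) (hac : a ≠ c) (hbd : b ≠ d) :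
    HasEDC G (k + 1) := by
  let S : Set (Sym2 V) := {s(a, b), s(b, c), s(c, d), s(d, a)}
  have huS : ∀ e ∈ S, u ∉ e := by
    simp [S, hab.2.1.ne, hab.2.2.ne, hcd.2.1.ne, hcd.2.2.ne]
  have hS : S.encard ≤ (4 : ℕ) := by
    grw [Set.encard_insert_le, Set.encard_insert_le, Set.encard_insert_le, Set.encard_singleton]
    norm_num
  exact (hk (G.deleteEdges S) (deleteEdges_le S)
    (le_encard_edgeSet_link_deleteEdges huS hS he)).succ_of_square (deleteEdges_le S)
      hab.1 hbc.1 hcd.1 hda.1 hac hbd (by simp [S]) (by simp [S]) (by simp [S]) (by simp [S])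

lemma hasEDC_two_of_four_le (he : 4 ≤ (link G u).edgeSet.encard) : HasEDC G 2 := by
  by_cases h3 : (link G u).CliqueFree 3
  · exact hasEDC_two_of_cliqueFree h3 (le_trans (by norm_num) he)
  · exact hasEDC_succ_of_not_cliqueFree_link (m := 1) (fun _ _ => hasEDC_one_of_one_le)
      (by norm_num [he]) h3

lemma exists_two_lt_encard_neighborSet_link (h3 : (link G u).CliqueFree 3)
    (he : 7 ≤ (link G u).edgeSet.encard) (hG : ¬HasEDC G 3) :
    ∃ a, 2 < ((link G u).neighborSet a).encard := by
  by_contra! hdeg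
  obtain ⟨⟨a, b⟩, hab : (link G u).Adj a b⟩ :=
    Set.encard_pos.1 (lt_of_lt_of_le (by norm_num) he)
  refine hG ((hasEDC_two_of_cliqueFree (u := u) ?_ ?_).succ_of_link_adj hab)
  · exact h3.anti (link_mono deleteIncidenceSet_deleteIncidenceSet_le)
  · refine (ENat.add_le_add_iff_right (ENat.natCast_ne_top 4)).1 ?_
    calc 3 + (4 : ℕ) = (7 : ℕ∞) := by norm_num
      _ ≤ _ := he
      _ ≤ _ := encard_edgeSet_link_le_deleteIncidenceSet hab
      _ ≤ _ := by
        grw [Set.encard_union_le, encard_incidenceSet, encard_incidenceSet, hdeg a, hdeg b]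
        norm_num

lemma hasEDC_three_of_cliqueFree (h3 : (link G u).CliqueFree 3)
    (he : 7 ≤ (link G u).edgeSet.encard) : HasEDC G 3 := by
  by_contra hG
  have hno3 {x y z : V} (hxy : (link G u).Adj x y) (hxz : (link G u).Adj x z) :
      ¬(link G u).Adj y z :=
    fun hyz => h3 {x, y, z} (is3Clique_triple_iff.2 ⟨hxy, hxz, hyz⟩)
  have htwo (K : SimpleGraph V) (hK : K ≤ G) : (3 : ℕ) ≤ (link K u).edgeSet.encard → HasEDC K 2 :=
    hasEDC_two_of_cliqueFree (h3.anti (link_mono hK))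
  have hext {x y : V} : (link G u).Adj x y → ∃ z ≠ y, (link G u).Adj x z :=
    exists_link_adj_ne (htwo _ deleteIncidenceSet_deleteIncidenceSet_le)
      (by norm_num [he]) hG
  obtain ⟨a, ha⟩ := exists_two_lt_encard_neighborSet_link h3 he hG
  obtain ⟨N, hN, hN3⟩ := Set.exists_subset_encard_eq (Order.add_one_le_of_lt ha)
  obtain ⟨p, q, r, hpq, hpr, hqr, rfl⟩ := Set.encard_eq_three.1 (hN3.trans (by norm_num))
  obtain ⟨hap, haq, har⟩ : (link G u).Adj a p ∧ (link G u).Adj a q ∧ (link G u).Adj a r := by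
    simpa [Set.insert_subset_iff] using hN
  obtain ⟨x, hxa, hpx⟩ := hext hap.symm
  obtain ⟨y, hya, hqy⟩ := hext haq.symm
  have hxy : x ≠ y := by
    rintro rfl
    exact hG (hasEDC_succ_of_link_square htwo (by norm_num [he]) hap hpx hqy.symm haq.symm
      hxa.symm hpq)
  have hdisj {z : V} (haz : (link G u).Adj a z) : x ≠ z ∧ y ≠ z :=
    ⟨fun h => hno3 hap (h ▸ haz) hpx, fun h => hno3 haq (h ▸ haz) hqy⟩
  have := hdisj hap
  have := hdisj haq
  have := hdisj har
  have := hap.ne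
  have := haq.ne
  have := har.ne
  exact hG (hasEDC_three_of_matching hpx hqy har (by grind))

end Link

lemma ecard_lt_ecard_induce_compl_add_card {V : Type*} [Fintype V] (G : SimpleGraph V) (u : V) :
    ecard G < ecard (G.induce ({u}ᶜ : Set V)) + Fintype.card V := by
  have h1 := card_edgeFinset_induce_compl_singleton G u
  have h2 := card_edgeFinset_deleteIncidenceSet G u
  have h3 := G.degree_lt_card_verts u
  simp only [ecard, Nat.card_eq_fintype_card, ← edgeFinset_card]
  lia

theorem edge_bound_k3_general {V : Type*} {G : SimpleGraph V} {u : V} {s : Set V}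
    (hs : ∀ v ∈ s, G.Adj u v) (hG : ¬HasEDC G 3) : (G.induce s).edgeSet.encard ≤ 6 := by
  refine (encard_edgeSet_induce_le_link hs).trans ?_
  by_contra! h
  have he : 7 ≤ (link G u).edgeSet.encard := Order.add_one_le_of_lt h
  by_cases h3 : (link G u).CliqueFree 3
  · exact hG (hasEDC_three_of_cliqueFree h3 he)
  · exact hG (hasEDC_succ_of_not_cliqueFree_link (m := 4) (fun _ _ => hasEDC_two_of_four_le)
      (by norm_num [he]) h3)

/-- If `G` is an `n`-vertex graph with a dominating vertex `u*` and without `3` pairwise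
edge-disjoint cycles, then `e(G - u*) ≤ 6` and hence `e(G) ≤ n + 5`. -/
theorem edge_bound_k3 {V : Type*} [Fintype V] (G : SimpleGraph V) (u : V)
    (hu : ∀ v, v ≠ u → G.Adj u v) (hG : phi G ≤ 2) :
    ecard (G.induce ({u}ᶜ : Set V)) ≤ 6 ∧ ecard G ≤ Fintype.card V + 5 := by
  have h6 : ecard (G.induce ({u}ᶜ : Set V)) ≤ 6 :=
    ENat.toNat_le_of_le_natCast
      (edge_bound_k3_general hu fun h => absurd (h.le_phi.trans hG) (by norm_num))
  have := ecard_lt_ecard_induce_compl_add_card G u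
  exact ⟨h6, by lia⟩

end PaperEDC
end
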